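/- arXiv:1702.08080 — 4 statements merged into one kernel-verified Lean document; each statement's English description precedes it below -/
import Mathlib

section
/- G has a subgroup of index 8 whose abelianization is isomorphic to ℤ × (ℤ/2ℤ)³ × (ℤ/3ℤ)² × (ℤ/5ℤ)³. (These index-8 subgroups correspond to the degree-8 covers of the Weber–Seifert dodecahedral space in which the canonical surface splits into two immersed connected components.) -/
/-! The subgroup `K` is the stabilizer of a point for an explicit transitive action of `G` on eight
points, and its abelianization is computed by the Reidemeister–Schreier method, phrased with
cocycles, i.e. with functions `c g i` of `g : G` and a coset `i` that satisfy
`c (gh) i = c g (h i) + c h i`.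

A cocycle with values in `A = ℤ × ℤ/30 × ℤ/30 × ℤ/10` is prescribed on the generators (`val`) and
extended to `G` (`delta`); restricted to `K` and to the base point it is a homomorphism
`psi : Kᵃᵇ → A`. Conversely, the elements `rep (g i)⁻¹ g rep i` of `K`, with `rep` a Schreier
transversal, form a cocycle with values in `Kᵃᵇ`. Its values on the generators solve the linear
system given by the relators and the tree edges, and `exists_factor` shows that every solution of
that system factors through `val` by a homomorphism `E : A → B`. As cocycles are determined by
their values on generators, `E ∘ psi` is the identity of `Kᵃᵇ`, so `psi` is injective. It is
surjective because its range contains the values of `val`, which generate `A`. The Chinese remainder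
theorem rewrites `A` in the form of the statement. -/


/-- Generators of the fundamental group of the Weber–Seifert dodecahedral space. -/
inductive Gen : Type
  | u | v | w | x | y | z
  deriving DecidableEq

open FreeGroup in
/-- The six relators of the Weber–Seifert presentation. -/
def wsRels : Set (FreeGroup Gen) :=
  { of .u * of .x * (of .y)⁻¹ * (of .v)⁻¹ * of .w,
    of .u * of .y * (of .z)⁻¹ * (of .w)⁻¹ * of .x,
    of .u * of .z * (of .v)⁻¹ * (of .x)⁻¹ * of .y,
    of .u * of .v * (of .w)⁻¹ * (of .y)⁻¹ * of .z,
    of .u * of .w * (of .x)⁻¹ * (of .z)⁻¹ * of .v,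
    of .v * of .x * of .z * of .w * of .y }

/-- The fundamental group of the Weber–Seifert hyperbolic dodecahedral space. -/
abbrev G : Type := PresentedGroup wsRels

def u : G := PresentedGroup.of Gen.u
def v : G := PresentedGroup.of Gen.v
def w : G := PresentedGroup.of Gen.w
def x : G := PresentedGroup.of Gen.x
def y : G := PresentedGroup.of Gen.y
def z : G := PresentedGroup.of Gen.z

/-! ### Permutations and cocycle values of the generators -/

/-- The left action of the generators on the eight cosets. -/
def act : Gen → Fin 8 → Fin 8
  | .u => ![3, 0, 2, 4, 7, 1, 5, 6]
  | .v => ![2, 1, 5, 6, 3, 4, 7, 0]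
  | .w => ![4, 2, 0, 1, 6, 5, 7, 3]
  | .x => ![7, 0, 1, 2, 6, 5, 3, 4]
  | .y => ![6, 1, 5, 7, 2, 0, 3, 4]
  | .z => ![5, 6, 2, 7, 3, 1, 4, 0]

/-- The inverse permutations of `act`. -/
def actInv : Gen → Fin 8 → Fin 8
  | .u => ![1, 5, 2, 0, 3, 6, 7, 4]
  | .v => ![7, 1, 0, 4, 5, 2, 3, 6]
  | .w => ![2, 3, 1, 7, 0, 5, 4, 6]
  | .x => ![1, 2, 3, 6, 7, 5, 4, 0]
  | .y => ![5, 1, 4, 6, 7, 2, 0, 3]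
  | .z => ![7, 5, 2, 4, 6, 0, 1, 3]

/-- Integer representatives of `val`: the four entries of `coef g i` are the coordinates of the
value at the generator `g` and the coset `i` in `ℤ`, `ℤ/30`, `ℤ/30` and `ℤ/10`. -/
def coef : Gen → Fin 8 → ℤ × ℤ × ℤ × ℤ
  | .u, i => (![0, 0, 0, 1, 0, 0, 0, -1] i,
      ![-6, 0, 9, 0, -4, 0, 15, -2] i,
      ![-9, 9, 6, 0, 0, -3, 6, 9] i,
      ![2, -2, -2, 0, -2, 2, -2, -2] i)
  | .v, i => (![0, 0, 0, 0, 1, 0, -1, 0] i,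
      ![6, 9, 0, 6, 0, -9, -2, 2] i,
      ![-12, 6, 0, -3, 3, -9, -3, 6] i,
      ![3, 1, 0, -2, 0, -2, 0, -2] i)
  | .w, i => (![0, 0, 0, 0, 1, 0, 0, -1] i,
      ![0, 3, 3, 9, -2, 15, 0, 2] i,
      ![0, -6, 12, 6, 2, -6, 3, 1] i,
      ![0, 4, 0, -2, -2, 2, 4, 0] i)
  | .x, i => (![0, 0, 0, 0, 0, 0, -1, 1] i,
      ![0, 9, 0, 0, 0, 3, 10, 2] i,
      ![0, 3, 0, -3, 0, 0, -4, 4] i,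
      ![0, -3, 0, 0, 0, -3, 2, 0] i)
  | .y, i => (![0, 0, 0, 0, 0, 0, 1, -1] i,
      ![0, 3, 9, 10, 0, 0, 2, 0] i,
      ![15, -6, -12, 9, 0, 3, 1, 2] i,
      ![2, -4, 0, 0, 0, 0, 2, -2] i)
  | .z, i => (![0, 0, 0, -1, 0, 0, 1, 0] i,
      ![3, 3, 15, -14, 0, -9, 4, -2] i,
      ![-3, 0, 6, 13, 0, -3, -1, 6] i,
      ![5, 0, -1, 0, 0, -2, 4, -4] i)

/-- The abelianization in invariant-factor form. -/
abbrev A : Type := ℤ × ZMod 30 × ZMod 30 × ZMod 10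

/-- The class in `A` of the Schreier generator attached to the generator `g` and the coset `i`. -/
def val (g : Gen) (i : Fin 8) : A :=
  ((coef g i).1, ((coef g i).2.1 : ZMod 30), ((coef g i).2.2.1 : ZMod 30),
    ((coef g i).2.2.2 : ZMod 10))

/-! ### The linear system of the Schreier generators -/

/-- Elements of orders dividing `30`, `30` and `10`, together with an arbitrary element, define a
homomorphism out of `A`. -/
theorem exists_hom {B : Type*} [AddCommGroup B] (e0 e1 e2 e3 : B)
    (t1 : (30 : ℤ) • e1 = 0) (t2 : (30 : ℤ) • e2 = 0) (t3 : (10 : ℤ) • e3 = 0) :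
    ∃ E : A →+ B, ∀ n p q r : ℤ,
      E (n, (p : ZMod 30), (q : ZMod 30), (r : ZMod 10)) = n • e0 + p • e1 + q • e2 + r • e3 := by
  let f (n : ℕ) (e : B) (h : (n : ℤ) • e = 0) : ZMod n →+ B :=
    ZMod.lift n ⟨zmultiplesHom B e, by simpa using h⟩
  have hf (n : ℕ) (e : B) (h : (n : ℤ) • e = 0) (k : ℤ) : f n e h (k : ZMod n) = k • e := by
    simp [f]
  refine ⟨(zmultiplesHom B e0).coprod ((f 30 e1 t1).coprod ((f 30 e2 t2).coprod (f 10 e3 t3))), ?_⟩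
  intro n p q r
  simp only [AddMonoidHom.coprod_apply, hf, zmultiplesHom_apply]
  abel

/-- The Reidemeister–Schreier computation: the 48 unknowns `c g i` stand for the classes of the
Schreier generators, `h1`–`h6` are the 48 rewritten relators and the remaining hypotheses say that
the seven tree edges are trivial. Every solution in an abelian group `B` is the image of the
solution `val` in `A`. -/
theorem exists_factor {B : Type*} [AddCommGroup B] (c : Gen → Fin 8 → B)
    (h1 : ∀ i, c .w (act .u (act .x i)) + c .u (act .x i) + c .x i = c .v (act .y i) + c .y i)
    (h2 : ∀ i, c .x (act .u (act .y i)) + c .u (act .y i) + c .y i = c .w (act .z i) + c .z i)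
    (h3 : ∀ i, c .y (act .u (act .z i)) + c .u (act .z i) + c .z i = c .x (act .v i) + c .v i)
    (h4 : ∀ i, c .z (act .u (act .v i)) + c .u (act .v i) + c .v i = c .y (act .w i) + c .w i)
    (h5 : ∀ i, c .v (act .u (act .w i)) + c .u (act .w i) + c .w i = c .z (act .x i) + c .x i)
    (h6 : ∀ i, c .v (act .x (act .z (act .w (act .y i)))) + c .x (act .z (act .w (act .y i))) +
      c .z (act .w (act .y i)) + c .w (act .y i) + c .y i = 0)
    (w0 : c .w 0 = 0) (y4 : c .y 4 = 0) (x0 : c .x 0 = 0) (z4 : c .z 4 = 0)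
    (x2 : c .x 2 = 0) (x4 : c .x 4 = 0) (v2 : c .v 2 = 0) :
    ∃ E : A →+ B, ∀ g i, c g i = E (val g i) := by
  have r10 : c .w 6 + c .u 7 + c .x 0 = c .v 6 + c .y 0 := h1 0
  have r11 : c .w 3 + c .u 0 + c .x 1 = c .v 1 + c .y 1 := h1 1
  have r12 : c .w 0 + c .u 1 + c .x 2 = c .v 5 + c .y 2 := h1 2
  have r13 : c .w 2 + c .u 2 + c .x 3 = c .v 7 + c .y 3 := h1 3
  have r14 : c .w 5 + c .u 6 + c .x 4 = c .v 2 + c .y 4 := h1 4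
  have r15 : c .w 1 + c .u 5 + c .x 5 = c .v 0 + c .y 5 := h1 5
  have r16 : c .w 4 + c .u 3 + c .x 6 = c .v 3 + c .y 6 := h1 6
  have r17 : c .w 7 + c .u 4 + c .x 7 = c .v 4 + c .y 7 := h1 7
  have r20 : c .x 5 + c .u 6 + c .y 0 = c .w 5 + c .z 0 := h2 0
  have r23 : c .x 6 + c .u 7 + c .y 3 = c .w 7 + c .z 3 := h2 3
  have r24 : c .x 2 + c .u 2 + c .y 4 = c .w 3 + c .z 4 := h2 4
  have r25 : c .x 3 + c .u 0 + c .y 5 = c .w 1 + c .z 5 := h2 5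
  have r26 : c .x 4 + c .u 3 + c .y 6 = c .w 4 + c .z 6 := h2 6
  have r27 : c .x 7 + c .u 4 + c .y 7 = c .w 0 + c .z 7 := h2 7
  have r30 : c .y 1 + c .u 5 + c .z 0 = c .x 2 + c .v 0 := h3 0
  have r32 : c .y 2 + c .u 2 + c .z 2 = c .x 5 + c .v 2 := h3 2
  have r33 : c .y 6 + c .u 7 + c .z 3 = c .x 6 + c .v 3 := h3 3
  have r34 : c .y 4 + c .u 3 + c .z 4 = c .x 3 + c .v 4 := h3 4
  have r35 : c .y 0 + c .u 1 + c .z 5 = c .x 4 + c .v 5 := h3 5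
  have r36 : c .y 7 + c .u 4 + c .z 6 = c .x 7 + c .v 6 := h3 6
  have r40 : c .z 2 + c .u 2 + c .v 0 = c .y 4 + c .w 0 := h4 0
  have r41 : c .z 0 + c .u 1 + c .v 1 = c .y 2 + c .w 1 := h4 1
  have r42 : c .z 1 + c .u 5 + c .v 2 = c .y 0 + c .w 2 := h4 2
  have r43 : c .z 5 + c .u 6 + c .v 3 = c .y 1 + c .w 3 := h4 3
  have r44 : c .z 4 + c .u 3 + c .v 4 = c .y 6 + c .w 4 := h4 4
  have r45 : c .z 7 + c .u 4 + c .v 5 = c .y 5 + c .w 5 := h4 5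
  have r47 : c .z 3 + c .u 0 + c .v 7 = c .y 3 + c .w 7 := h4 7
  have r50 : c .v 7 + c .u 4 + c .w 0 = c .z 7 + c .x 0 := h5 0
  have r51 : c .v 2 + c .u 2 + c .w 1 = c .z 0 + c .x 1 := h5 1
  have r53 : c .v 0 + c .u 1 + c .w 3 = c .z 2 + c .x 3 := h5 3
  have r54 : c .v 5 + c .u 6 + c .w 4 = c .z 6 + c .x 4 := h5 4
  have r55 : c .v 1 + c .u 5 + c .w 5 = c .z 5 + c .x 5 := h5 5
  have r56 : c .v 6 + c .u 7 + c .w 6 = c .z 3 + c .x 6 := h5 6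
  have r57 : c .v 4 + c .u 3 + c .w 7 = c .z 4 + c .x 7 := h5 7
  have r60 : c .v 7 + c .x 0 + c .z 7 + c .w 6 + c .y 0 = 0 := h6 0
  have r61 : c .v 1 + c .x 2 + c .z 2 + c .w 1 + c .y 1 = 0 := h6 1
  have r62 : c .v 0 + c .x 1 + c .z 5 + c .w 5 + c .y 2 = 0 := h6 2
  have r63 : c .v 4 + c .x 7 + c .z 3 + c .w 7 + c .y 3 = 0 := h6 3
  have r64 : c .v 5 + c .x 5 + c .z 0 + c .w 2 + c .y 4 = 0 := h6 4
  have r65 : c .v 2 + c .x 3 + c .z 4 + c .w 0 + c .y 5 = 0 := h6 5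
  -- the remaining 32 values are forced, one at a time, in terms of nine of them
  have u6 : c .u 6 = -c .w 5 := by
    linear_combination (norm := module) r14 - x4 + y4 + v2
  have u2 : c .u 2 = c .w 3 := by
    linear_combination (norm := module) r24 - y4 - x2 + z4
  have z2 : c .z 2 = -c .w 3 - c .v 0 := by
    linear_combination (norm := module) r40 - u2 + w0 + y4
  have x3 : c .x 3 = -c .y 5 := by
    linear_combination (norm := module) r65 - w0 - z4 - v2
  have v4 : c .v 4 = c .u 3 + c .y 5 := by
    linear_combination (norm := module) -r34 + z4 + y4 - x3
  have w4 : c .w 4 = (2 : ℤ) • c .u 3 + c .y 5 - c .y 6 := by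
    linear_combination (norm := module) -r44 + v4 + z4
  have u1 : c .u 1 = -(2 : ℤ) • c .w 3 - c .y 5 - (2 : ℤ) • c .v 0 := by
    linear_combination (norm := module) r53 + x3 + z2
  have x7 : c .x 7 = (2 : ℤ) • c .u 3 + c .y 5 + c .w 7 := by
    linear_combination (norm := module) -r57 + v4 - z4
  have u4 : c .u 4 = -c .u 3 + c .y 7 - (2 : ℤ) • c .w 7 := by
    linear_combination (norm := module) r17 - x7 + v4
  have z6 : c .z 6 = -c .u 3 - c .y 5 + (2 : ℤ) • c .y 6 := by
    linear_combination (norm := module) -r26 + x4 - w4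
  have z7 : c .z 7 = c .u 3 + c .y 5 + (2 : ℤ) • c .y 7 - c .w 7 := by
    linear_combination (norm := module) -r27 + u4 + x7 - w0
  have v6 : c .v 6 = -(4 : ℤ) • c .u 3 - (2 : ℤ) • c .y 5 + (2 : ℤ) • c .y 6 + (2 : ℤ) • c .y 7
      - (3 : ℤ) • c .w 7 := by
    linear_combination (norm := module) -r36 + z6 + u4 - x7
  have v5 : c .v 5 = c .w 5 - (3 : ℤ) • c .y 7 + (3 : ℤ) • c .w 7 := by
    linear_combination (norm := module) r45 - u4 - z7
  have v7 : c .v 7 = (2 : ℤ) • c .u 3 + c .y 5 + c .y 7 + c .w 7 := by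
    linear_combination (norm := module) r50 - w0 - u4 + x0 + z7
  have y2 : c .y 2 = -c .w 5 - (2 : ℤ) • c .w 3 - c .y 5 - (2 : ℤ) • c .v 0 + (3 : ℤ) • c .y 7
      - (3 : ℤ) • c .w 7 := by
    linear_combination (norm := module) -r12 + x2 + u1 + w0 - v5
  have x5 : c .x 5 = -c .w 5 - (2 : ℤ) • c .w 3 - c .y 5 - (3 : ℤ) • c .v 0 + (3 : ℤ) • c .y 7
      - (3 : ℤ) • c .w 7 := by
    linear_combination (norm := module) -r32 + z2 + u2 + y2 - v2
  have y0 : c .y 0 = c .w 5 + (2 : ℤ) • c .w 3 + c .y 5 + (2 : ℤ) • c .v 0 - c .z 5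
      - (3 : ℤ) • c .y 7 + (3 : ℤ) • c .w 7 := by
    linear_combination (norm := module) r35 - u1 + v5 + x4
  have w6 : c .w 6 = -c .w 5 - (3 : ℤ) • c .u 3 - (2 : ℤ) • c .w 3 - (3 : ℤ) • c .y 5
      - (2 : ℤ) • c .v 0 + c .z 5 - (3 : ℤ) • c .w 7 := by
    linear_combination (norm := module) r60 - y0 - z7 - x0 - v7
  have x1 : c .x 1 = (2 : ℤ) • c .w 3 + c .y 5 + c .v 0 - c .z 5 - (3 : ℤ) • c .y 7
      + (3 : ℤ) • c .w 7 := by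
    linear_combination (norm := module) r62 - y2
  have u7 : c .u 7 = (2 : ℤ) • c .w 5 - c .u 3 + (4 : ℤ) • c .w 3 + (2 : ℤ) • c .y 5
      + (4 : ℤ) • c .v 0 + (2 : ℤ) • c .y 6 - (2 : ℤ) • c .z 5 - c .y 7 + (3 : ℤ) • c .w 7 := by
    linear_combination (norm := module) r10 - x0 - w6 + y0 + v6
  have z0 : c .z 0 = -(2 : ℤ) • c .w 5 - c .v 0 - c .z 5 := by
    linear_combination (norm := module) -r20 + y0 + u6 + x5
  have w1 : c .w 1 = -(2 : ℤ) • c .w 5 + c .w 3 + c .y 5 - (2 : ℤ) • c .z 5 - (3 : ℤ) • c .y 7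
      + (3 : ℤ) • c .w 7 := by
    linear_combination (norm := module) r51 - u2 - v2 + x1 + z0
  have w2 : c .w 2 = (2 : ℤ) • c .w 5 + (2 : ℤ) • c .w 3 + c .y 5 + (4 : ℤ) • c .v 0 + c .z 5 := by
    linear_combination (norm := module) r64 - y4 - z0 - x5 - v5
  have y3 : c .y 3 = (2 : ℤ) • c .w 5 - (2 : ℤ) • c .u 3 + (3 : ℤ) • c .w 3 - c .y 5
      + (4 : ℤ) • c .v 0 + c .z 5 - c .y 7 - c .w 7 := by
    linear_combination (norm := module) -r13 + x3 + u2 + w2 - v7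
  have u5 : c .u 5 = (3 : ℤ) • c .w 5 + c .w 3 + c .y 5 + (4 : ℤ) • c .v 0 + (2 : ℤ) • c .z 5 := by
    linear_combination (norm := module) r15 - x5 - w1
  have u0 : c .u 0 = -(2 : ℤ) • c .w 5 + c .w 3 + c .y 5 - c .z 5 - (3 : ℤ) • c .y 7
      + (3 : ℤ) • c .w 7 := by
    linear_combination (norm := module) r25 - x3 + w1
  have y1 : c .y 1 = -c .w 5 - c .w 3 - c .y 5 - (2 : ℤ) • c .v 0 - c .z 5 := by
    linear_combination (norm := module) r30 - z0 - u5 + x2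
  have v1 : c .v 1 = -c .w 5 + c .w 3 + c .y 5 + c .v 0 - c .z 5 := by
    linear_combination (norm := module) r41 - u1 - z0 + w1 + y2
  have z1 : c .z 1 = (3 : ℤ) • c .w 3 + c .y 5 + (2 : ℤ) • c .v 0 - (2 : ℤ) • c .z 5
      - (3 : ℤ) • c .y 7 + (3 : ℤ) • c .w 7 := by
    linear_combination (norm := module) r42 - v2 - u5 + w2 + y0
  have v3 : c .v 3 = -c .y 5 - (2 : ℤ) • c .v 0 - (2 : ℤ) • c .z 5 := by
    linear_combination (norm := module) r43 - u6 + y1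
  have z3 : c .z 3 = (4 : ℤ) • c .w 5 - (4 : ℤ) • c .u 3 + (2 : ℤ) • c .w 3 - (3 : ℤ) • c .y 5
      + (4 : ℤ) • c .v 0 + (2 : ℤ) • c .z 5 + c .y 7 - (4 : ℤ) • c .w 7 := by
    linear_combination (norm := module) r47 - v7 - u0 + y3
  have x6 : c .x 6 = -(3 : ℤ) • c .w 5 - (4 : ℤ) • c .u 3 - (2 : ℤ) • c .v 0 + (4 : ℤ) • c .y 6
      - (3 : ℤ) • c .z 5 + c .w 7 := by
    linear_combination (norm := module) -r56 + w6 + u7 + v6 - z3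
  -- the relations that were not used yet relate the nine values to each other
  have q0 : (4 : ℤ) • c .w 3 + (2 : ℤ) • c .y 5 + (2 : ℤ) • c .v 0 - (6 : ℤ) • c .y 7
      + (6 : ℤ) • c .w 7 = 0 := by
    linear_combination (norm := module) r11 - x1 - u0 + y1 + v1
  have q1 : -(3 : ℤ) • c .w 5 - c .u 3 + (2 : ℤ) • c .y 5 + (2 : ℤ) • c .y 6 - c .z 5 + c .w 7 = 0 := by
    linear_combination (norm := module) r16 - x6 - w4 + v3
  have q2 : -(3 : ℤ) • c .w 5 - (3 : ℤ) • c .u 3 + (5 : ℤ) • c .w 3 + (4 : ℤ) • c .y 5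
      + (2 : ℤ) • c .v 0 + (6 : ℤ) • c .y 6 - (6 : ℤ) • c .z 5 - (3 : ℤ) • c .y 7
      + (6 : ℤ) • c .w 7 = 0 := by
    linear_combination (norm := module) r23 - y3 - u7 - x6 + z3
  have q3 : (9 : ℤ) • c .w 5 - c .u 3 + (6 : ℤ) • c .w 3 + (12 : ℤ) • c .v 0 - c .y 6
      + (5 : ℤ) • c .z 5 - (2 : ℤ) • c .w 7 = 0 := by
    linear_combination (norm := module) r33 - z3 - u7 + v3 + x6
  have q4 : (3 : ℤ) • c .u 3 + (2 : ℤ) • c .y 5 - (3 : ℤ) • c .y 6 - (3 : ℤ) • c .y 7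
      + (3 : ℤ) • c .w 7 = 0 := by
    linear_combination (norm := module) r54 - w4 - u6 - v5 + x4 + z6
  have q5 : (4 : ℤ) • c .w 5 + (4 : ℤ) • c .w 3 + (3 : ℤ) • c .y 5 + (8 : ℤ) • c .v 0
      - (3 : ℤ) • c .y 7 + (3 : ℤ) • c .w 7 = 0 := by
    linear_combination (norm := module) r55 - u5 - v1 + x5
  have q6 : -(4 : ℤ) • c .w 5 + c .y 5 - (2 : ℤ) • c .v 0 - (4 : ℤ) • c .z 5 - (3 : ℤ) • c .y 7
      + (3 : ℤ) • c .w 7 = 0 := by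
    linear_combination (norm := module) r61 - y1 - w1 - z2 - x2 - v1
  have q7 : (6 : ℤ) • c .w 5 - (3 : ℤ) • c .u 3 + (5 : ℤ) • c .w 3 - (2 : ℤ) • c .y 5
      + (8 : ℤ) • c .v 0 + (3 : ℤ) • c .z 5 - (3 : ℤ) • c .w 7 = 0 := by
    linear_combination (norm := module) r63 - y3 - z3 - x7 - v4
  -- images of the four standard generators of `A`
  obtain ⟨e0, he0⟩ : ∃ e, e = c .u 3 := ⟨_, rfl⟩
  obtain ⟨e1, he1⟩ : ∃ e, e = c .z 7 + c .w 1 := ⟨_, rfl⟩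
  obtain ⟨e2, he2⟩ : ∃ e, e = c .x 7 + c .v 6 := ⟨_, rfl⟩
  obtain ⟨e3, he3⟩ : ∃ e, e = c .w 5 + c .z 2 := ⟨_, rfl⟩
  have t1 : (30 : ℤ) • e1 = 0 := by
    linear_combination (norm := module) (30 : ℤ) • he1 + (30 : ℤ) • z7 + (30 : ℤ) • w1
      - (9 : ℤ) • q0 + (6 : ℤ) • q1 + (13 : ℤ) • q2 + (27 : ℤ) • q3 + (21 : ℤ) • q4
      - (24 : ℤ) • q5 + (18 : ℤ) • q6 - (13 : ℤ) • q7
  have t2 : (30 : ℤ) • e2 = 0 := by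
    linear_combination (norm := module) (30 : ℤ) • he2 + (30 : ℤ) • x7 + (30 : ℤ) • v6
      - (3 : ℤ) • q0 + (4 : ℤ) • q1 + (2 : ℤ) • q2 - (10 : ℤ) • q3 - (10 : ℤ) • q4 + (3 : ℤ) • q5
      - (9 : ℤ) • q6 + (10 : ℤ) • q7
  have t3 : (10 : ℤ) • e3 = 0 := by
    linear_combination (norm := module) (10 : ℤ) • he3 + (10 : ℤ) • z2 - q0 - (2 : ℤ) • q1
      - (16 : ℤ) • q3 + (4 : ℤ) • q4 + (10 : ℤ) • q5 - (12 : ℤ) • q6 + (10 : ℤ) • q7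
  have s0 : c .w 5 = (0 : ℤ) • e0 + (15 : ℤ) • e1 + (-6 : ℤ) • e2 + (2 : ℤ) • e3 := by
    linear_combination (norm := module) -(15 : ℤ) • he1 - (15 : ℤ) • z7 - (15 : ℤ) • w1
      + (6 : ℤ) • he2 + (6 : ℤ) • x7 + (6 : ℤ) • v6 - (2 : ℤ) • he3 - (2 : ℤ) • z2 + (4 : ℤ) • q0
      - (2 : ℤ) • q1 - (6 : ℤ) • q2 - (13 : ℤ) • q3 - (13 : ℤ) • q4 + (11 : ℤ) • q5 - (9 : ℤ) • q6
      + (7 : ℤ) • q7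
  have s1 : c .u 3 = (1 : ℤ) • e0 + (0 : ℤ) • e1 + (0 : ℤ) • e2 + (0 : ℤ) • e3 := by
    linear_combination (norm := module) -he0
  have s2 : c .w 3 = (0 : ℤ) • e0 + (9 : ℤ) • e1 + (6 : ℤ) • e2 + (-2 : ℤ) • e3 := by
    linear_combination (norm := module) -(9 : ℤ) • he1 - (9 : ℤ) • z7 - (9 : ℤ) • w1
      - (6 : ℤ) • he2 - (6 : ℤ) • x7 - (6 : ℤ) • v6 + (2 : ℤ) • he3 + (2 : ℤ) • z2 + (3 : ℤ) • q0
      - (3 : ℤ) • q1 - (4 : ℤ) • q2 - (9 : ℤ) • q3 - (3 : ℤ) • q4 + (8 : ℤ) • q5 - (6 : ℤ) • q6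
      + (4 : ℤ) • q7
  have s3 : c .y 5 = (0 : ℤ) • e0 + (0 : ℤ) • e1 + (3 : ℤ) • e2 + (0 : ℤ) • e3 := by
    linear_combination (norm := module) -(3 : ℤ) • he2 - (3 : ℤ) • x7 - (3 : ℤ) • v6
      + (2 : ℤ) • q4
  have s4 : c .v 0 = (0 : ℤ) • e0 + (6 : ℤ) • e1 + (-12 : ℤ) • e2 + (3 : ℤ) • e3 := by
    linear_combination (norm := module) -(6 : ℤ) • he1 - (6 : ℤ) • z7 - (6 : ℤ) • w1
      + (12 : ℤ) • he2 + (12 : ℤ) • x7 + (12 : ℤ) • v6 - (3 : ℤ) • he3 - (3 : ℤ) • z2 + q0 + q1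
      - (2 : ℤ) • q2 - (4 : ℤ) • q3 - (10 : ℤ) • q4 + (3 : ℤ) • q5 - (3 : ℤ) • q6 + (3 : ℤ) • q7
  have s5 : c .y 6 = (1 : ℤ) • e0 + (2 : ℤ) • e1 + (1 : ℤ) • e2 + (2 : ℤ) • e3 := by
    linear_combination (norm := module) -he0 - (2 : ℤ) • he1 - (2 : ℤ) • z7 - (2 : ℤ) • w1 - he2
      - x7 - v6 - (2 : ℤ) • he3 - (2 : ℤ) • z2 + q0 - q2 + q3 - (2 : ℤ) • q4 + q6 - q7
  have s6 : c .z 5 = (0 : ℤ) • e0 + (-9 : ℤ) • e1 + (-3 : ℤ) • e2 + (-2 : ℤ) • e3 := by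
    linear_combination (norm := module) (9 : ℤ) • he1 + (9 : ℤ) • z7 + (9 : ℤ) • w1
      + (3 : ℤ) • he2 + (3 : ℤ) • x7 + (3 : ℤ) • v6 + (2 : ℤ) • he3 + (2 : ℤ) • z2 - (3 : ℤ) • q0
      + (2 : ℤ) • q1 + (4 : ℤ) • q2 + (4 : ℤ) • q3 + (6 : ℤ) • q4 - (5 : ℤ) • q5 + (2 : ℤ) • q6
      - q7
  have s7 : c .y 7 = (-1 : ℤ) • e0 + (0 : ℤ) • e1 + (2 : ℤ) • e2 + (-2 : ℤ) • e3 := by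
    linear_combination (norm := module) he0 - (2 : ℤ) • he2 - (2 : ℤ) • x7 - (2 : ℤ) • v6
      + (2 : ℤ) • he3 + (2 : ℤ) • z2 - q1 - q3 + q4 + q5 - q6
  have s8 : c .w 7 = (-1 : ℤ) • e0 + (2 : ℤ) • e1 + (1 : ℤ) • e2 + (0 : ℤ) • e3 := by
    linear_combination (norm := module) he0 - (2 : ℤ) • he1 - (2 : ℤ) • z7 - (2 : ℤ) • w1 - he2
      - x7 - v6 + q0 - q1 - q2 - (2 : ℤ) • q4 + q5 - q7
  have fu6 : c .u 6 = (0 : ℤ) • e0 + (15 : ℤ) • e1 + (6 : ℤ) • e2 + (-2 : ℤ) • e3 := by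
    linear_combination (norm := module) u6 - s0 - t1
  have fu2 : c .u 2 = (0 : ℤ) • e0 + (9 : ℤ) • e1 + (6 : ℤ) • e2 + (-2 : ℤ) • e3 := by
    linear_combination (norm := module) u2 + s2
  have fz2 : c .z 2 = (0 : ℤ) • e0 + (15 : ℤ) • e1 + (6 : ℤ) • e2 + (-1 : ℤ) • e3 := by
    linear_combination (norm := module) z2 - s2 - s4 - t1
  have fx3 : c .x 3 = (0 : ℤ) • e0 + (0 : ℤ) • e1 + (-3 : ℤ) • e2 + (0 : ℤ) • e3 := by
    linear_combination (norm := module) x3 - s3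
  have fv4 : c .v 4 = (1 : ℤ) • e0 + (0 : ℤ) • e1 + (3 : ℤ) • e2 + (0 : ℤ) • e3 := by
    linear_combination (norm := module) v4 + s1 + s3
  have fw4 : c .w 4 = (1 : ℤ) • e0 + (-2 : ℤ) • e1 + (2 : ℤ) • e2 + (-2 : ℤ) • e3 := by
    linear_combination (norm := module) w4 + (2 : ℤ) • s1 + s3 - s5
  have fu1 : c .u 1 = (0 : ℤ) • e0 + (0 : ℤ) • e1 + (9 : ℤ) • e2 + (-2 : ℤ) • e3 := by
    linear_combination (norm := module) u1 - (2 : ℤ) • s2 - s3 - (2 : ℤ) • s4 - t1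
  have fx7 : c .x 7 = (1 : ℤ) • e0 + (2 : ℤ) • e1 + (4 : ℤ) • e2 + (0 : ℤ) • e3 := by
    linear_combination (norm := module) x7 + (2 : ℤ) • s1 + s3 + s8
  have fu4 : c .u 4 = (0 : ℤ) • e0 + (-4 : ℤ) • e1 + (0 : ℤ) • e2 + (-2 : ℤ) • e3 := by
    linear_combination (norm := module) u4 - s1 + s7 - (2 : ℤ) • s8
  have fz6 : c .z 6 = (1 : ℤ) • e0 + (4 : ℤ) • e1 + (-1 : ℤ) • e2 + (4 : ℤ) • e3 := by
    linear_combination (norm := module) z6 - s1 - s3 + (2 : ℤ) • s5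
  have fz7 : c .z 7 = (0 : ℤ) • e0 + (-2 : ℤ) • e1 + (6 : ℤ) • e2 + (-4 : ℤ) • e3 := by
    linear_combination (norm := module) z7 + s1 + s3 + (2 : ℤ) • s7 - s8
  have fv6 : c .v 6 = (-1 : ℤ) • e0 + (-2 : ℤ) • e1 + (-3 : ℤ) • e2 + (0 : ℤ) • e3 := by
    linear_combination (norm := module) v6 - (4 : ℤ) • s1 - (2 : ℤ) • s3 + (2 : ℤ) • s5
      + (2 : ℤ) • s7 - (3 : ℤ) • s8
  have fv5 : c .v 5 = (0 : ℤ) • e0 + (-9 : ℤ) • e1 + (-9 : ℤ) • e2 + (-2 : ℤ) • e3 := by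
    linear_combination (norm := module) v5 + s0 - (3 : ℤ) • s7 + (3 : ℤ) • s8 + t1 + t3
  have fv7 : c .v 7 = (0 : ℤ) • e0 + (2 : ℤ) • e1 + (6 : ℤ) • e2 + (-2 : ℤ) • e3 := by
    linear_combination (norm := module) v7 + (2 : ℤ) • s1 + s3 + s7 + s8
  have fy2 : c .y 2 = (0 : ℤ) • e0 + (9 : ℤ) • e1 + (-12 : ℤ) • e2 + (0 : ℤ) • e3 := by
    linear_combination (norm := module) y2 - s0 - (2 : ℤ) • s2 - s3 - (2 : ℤ) • s4 + (3 : ℤ) • s7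
      - (3 : ℤ) • s8 - (2 : ℤ) • t1 + t2 - t3
  have fx5 : c .x 5 = (0 : ℤ) • e0 + (3 : ℤ) • e1 + (0 : ℤ) • e2 + (-3 : ℤ) • e3 := by
    linear_combination (norm := module) x5 - s0 - (2 : ℤ) • s2 - s3 - (3 : ℤ) • s4 + (3 : ℤ) • s7
      - (3 : ℤ) • s8 - (2 : ℤ) • t1 + t2 - t3
  have fy0 : c .y 0 = (0 : ℤ) • e0 + (0 : ℤ) • e1 + (15 : ℤ) • e2 + (2 : ℤ) • e3 := by
    linear_combination (norm := module) y0 + s0 + (2 : ℤ) • s2 + s3 + (2 : ℤ) • s4 - s6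
      - (3 : ℤ) • s7 + (3 : ℤ) • s8 + (2 : ℤ) • t1 - t2 + t3
  have fw6 : c .w 6 = (0 : ℤ) • e0 + (0 : ℤ) • e1 + (3 : ℤ) • e2 + (4 : ℤ) • e3 := by
    linear_combination (norm := module) w6 - s0 - (3 : ℤ) • s1 - (2 : ℤ) • s2 - (3 : ℤ) • s3
      - (2 : ℤ) • s4 + s6 - (3 : ℤ) • s8 - (2 : ℤ) • t1 - t3
  have fx1 : c .x 1 = (0 : ℤ) • e0 + (9 : ℤ) • e1 + (3 : ℤ) • e2 + (-3 : ℤ) • e3 := by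
    linear_combination (norm := module) x1 + (2 : ℤ) • s2 + s3 + s4 - s6 - (3 : ℤ) • s7
      + (3 : ℤ) • s8 + t1 + t3
  have fu7 : c .u 7 = (-1 : ℤ) • e0 + (-2 : ℤ) • e1 + (9 : ℤ) • e2 + (-2 : ℤ) • e3 := by
    linear_combination (norm := module) u7 + (2 : ℤ) • s0 - s1 + (4 : ℤ) • s2 + (2 : ℤ) • s3
      + (4 : ℤ) • s4 + (2 : ℤ) • s5 - (2 : ℤ) • s6 - s7 + (3 : ℤ) • s8 + (4 : ℤ) • t1 - t2
      + (2 : ℤ) • t3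
  have fz0 : c .z 0 = (0 : ℤ) • e0 + (3 : ℤ) • e1 + (-3 : ℤ) • e2 + (5 : ℤ) • e3 := by
    linear_combination (norm := module) z0 - (2 : ℤ) • s0 - s4 - s6 - t1 + t2 - t3
  have fw1 : c .w 1 = (0 : ℤ) • e0 + (3 : ℤ) • e1 + (-6 : ℤ) • e2 + (4 : ℤ) • e3 := by
    linear_combination (norm := module) w1 - (2 : ℤ) • s0 + s2 + s3 - (2 : ℤ) • s6 - (3 : ℤ) • s7
      + (3 : ℤ) • s8 + t2
  have fw2 : c .w 2 = (0 : ℤ) • e0 + (3 : ℤ) • e1 + (12 : ℤ) • e2 + (0 : ℤ) • e3 := by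
    linear_combination (norm := module) w2 + (2 : ℤ) • s0 + (2 : ℤ) • s2 + s3 + (4 : ℤ) • s4 + s6
      + (2 : ℤ) • t1 - (2 : ℤ) • t2 + t3
  have fy3 : c .y 3 = (0 : ℤ) • e0 + (10 : ℤ) • e1 + (9 : ℤ) • e2 + (0 : ℤ) • e3 := by
    linear_combination (norm := module) y3 + (2 : ℤ) • s0 - (2 : ℤ) • s1 + (3 : ℤ) • s2 - s3
      + (4 : ℤ) • s4 + s6 - s7 - s8 + (2 : ℤ) • t1 - (2 : ℤ) • t2 + t3
  have fu5 : c .u 5 = (0 : ℤ) • e0 + (0 : ℤ) • e1 + (-3 : ℤ) • e2 + (2 : ℤ) • e3 := by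
    linear_combination (norm := module) u5 + (3 : ℤ) • s0 + s2 + s3 + (4 : ℤ) • s4 + (2 : ℤ) • s6
      + (2 : ℤ) • t1 - (2 : ℤ) • t2 + t3
  have fu0 : c .u 0 = (0 : ℤ) • e0 + (-6 : ℤ) • e1 + (-9 : ℤ) • e2 + (2 : ℤ) • e3 := by
    linear_combination (norm := module) u0 - (2 : ℤ) • s0 + s2 + s3 - s6 - (3 : ℤ) • s7
      + (3 : ℤ) • s8 + t2
  have fy1 : c .y 1 = (0 : ℤ) • e0 + (3 : ℤ) • e1 + (-6 : ℤ) • e2 + (-4 : ℤ) • e3 := by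
    linear_combination (norm := module) y1 - s0 - s2 - s3 - (2 : ℤ) • s4 - s6 - t1 + t2
  have fv1 : c .v 1 = (0 : ℤ) • e0 + (9 : ℤ) • e1 + (6 : ℤ) • e2 + (1 : ℤ) • e3 := by
    linear_combination (norm := module) v1 - s0 + s2 + s3 + s4 - s6
  have fz1 : c .z 1 = (0 : ℤ) • e0 + (3 : ℤ) • e1 + (0 : ℤ) • e2 + (0 : ℤ) • e3 := by
    linear_combination (norm := module) z1 + (3 : ℤ) • s2 + s3 + (2 : ℤ) • s4 - (2 : ℤ) • s6
      - (3 : ℤ) • s7 + (3 : ℤ) • s8 + (2 : ℤ) • t1 + t3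
  have fv3 : c .v 3 = (0 : ℤ) • e0 + (6 : ℤ) • e1 + (-3 : ℤ) • e2 + (-2 : ℤ) • e3 := by
    linear_combination (norm := module) v3 - s3 - (2 : ℤ) • s4 - (2 : ℤ) • s6 + t2
  have fz3 : c .z 3 = (-1 : ℤ) • e0 + (-14 : ℤ) • e1 + (13 : ℤ) • e2 + (0 : ℤ) • e3 := by
    linear_combination (norm := module) z3 + (4 : ℤ) • s0 - (4 : ℤ) • s1 + (2 : ℤ) • s2
      - (3 : ℤ) • s3 + (4 : ℤ) • s4 + (2 : ℤ) • s6 + s7 - (4 : ℤ) • s8 + (3 : ℤ) • t1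
      - (3 : ℤ) • t2 + t3
  have fx6 : c .x 6 = (-1 : ℤ) • e0 + (10 : ℤ) • e1 + (-4 : ℤ) • e2 + (2 : ℤ) • e3 := by
    linear_combination (norm := module) x6 - (3 : ℤ) • s0 - (4 : ℤ) • s1 - (2 : ℤ) • s4
      + (4 : ℤ) • s5 - (3 : ℤ) • s6 + s8 - t1 + (2 : ℤ) • t2
  have o : (0 : B) = (0 : ℤ) • e0 + (0 : ℤ) • e1 + (0 : ℤ) • e2 + (0 : ℤ) • e3 := by simp
  obtain ⟨E, hE⟩ := exists_hom e0 e1 e2 e3 t1 t2 t3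
  refine ⟨E, fun g i => Eq.trans ?_ (hE _ _ _ _).symm⟩
  cases g with
    | u =>
      fin_cases i
      exacts [fu0, fu1, fu2, s1, fu4, fu5, fu6, fu7]
    | v =>
      fin_cases i
      exacts [s4, fv1, v2.trans o, fv3, fv4, fv5, fv6, fv7]
    | w =>
      fin_cases i
      exacts [w0.trans o, fw1, fw2, s2, fw4, s0, fw6, s8]
    | x =>
      fin_cases i
      exacts [x0.trans o, fx1, x2.trans o, fx3, x4.trans o, fx5, fx6, fx7]
    | y =>
      fin_cases i
      exacts [fy0, fy1, fy2, fy3, y4.trans o, s3, s5, s7]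
    | z =>
      fin_cases i
      exacts [fz0, fz1, fz2, fz3, z4.trans o, s6, fz6, fz7]

/-! ### The action on eight points and its stabilizer -/

/-- The permutation of the eight cosets given by a generator. -/
def perm (g : Gen) : Equiv.Perm (Fin 8) where
  toFun := act g
  invFun := actInv g
  left_inv := by cases g <;> decide
  right_inv := by cases g <;> decide

/-- A map from the generators to a group kills the six relators as soon as it satisfies the
relations in a form free of inverses, namely `wux = vy` and its images under the rotation
`x → y → z → v → w → x`, and `vxzwy = 1`. -/
theorem lift_relators {H : Type*} [Group H] (f : Gen → H)
    (h1 : f .w * f .u * f .x = f .v * f .y) (h2 : f .x * f .u * f .y = f .w * f .z)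
    (h3 : f .y * f .u * f .z = f .x * f .v) (h4 : f .z * f .u * f .v = f .y * f .w)
    (h5 : f .v * f .u * f .w = f .z * f .x) (h6 : f .v * f .x * f .z * f .w * f .y = 1) :
    ∀ r ∈ wsRels, FreeGroup.lift f r = 1 := by
  have key (a b c d e : H) (h : e * a * b = d * c) : a * b * c⁻¹ * d⁻¹ * e = 1 := by
    have : a * b = e⁻¹ * (d * c) := by rw [← h]; group
    rw [this]; group
  rintro r (rfl | rfl | rfl | rfl | rfl | rfl) <;>
    simp only [map_mul, map_inv, FreeGroup.lift_apply_of]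
  · exact key _ _ _ _ _ h1
  · exact key _ _ _ _ _ h2
  · exact key _ _ _ _ _ h3
  · exact key _ _ _ _ _ h4
  · exact key _ _ _ _ _ h5
  · exact h6

/-- The inverse-free form of the relations holds in `G`. -/
theorem relators_G :
    w * u * x = v * y ∧ x * u * y = w * z ∧ y * u * z = x * v ∧ z * u * v = y * w ∧
      v * u * w = z * x ∧ v * x * z * w * y = 1 := by
  have key (a b c d e : G) (h : a * b * c⁻¹ * d⁻¹ * e = 1) : e * a * b = d * c := by
    have : a * b * c⁻¹ * d⁻¹ = e⁻¹ := eq_inv_of_mul_eq_one_left h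
    have h' : a * b = e⁻¹ * (d * c) := by rw [← this]; group
    rw [mul_assoc, h']; group
  have hr (r : FreeGroup Gen) (h : r ∈ wsRels) : PresentedGroup.mk wsRels r = 1 :=
    PresentedGroup.one_of_mem h
  refine ⟨key _ _ _ _ _ (hr _ (.inl rfl)), key _ _ _ _ _ (hr _ (.inr (.inl rfl))),
    key _ _ _ _ _ (hr _ (.inr (.inr (.inl rfl)))),
    key _ _ _ _ _ (hr _ (.inr (.inr (.inr (.inl rfl))))),
    key _ _ _ _ _ (hr _ (.inr (.inr (.inr (.inr (.inl rfl)))))),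
    hr _ (.inr (.inr (.inr (.inr (.inr rfl)))))⟩

/-- The permutation action of `G` on the eight cosets. -/
def rho : G →* Equiv.Perm (Fin 8) :=
  PresentedGroup.toGroup (f := perm) <| lift_relators perm
    (by ext i; revert i; decide) (by ext i; revert i; decide) (by ext i; revert i; decide)
    (by ext i; revert i; decide) (by ext i; revert i; decide) (by ext i; revert i; decide)

theorem rho_of (g : Gen) (i : Fin 8) : rho (PresentedGroup.of g) i = act g i := by
  rw [rho, PresentedGroup.toGroup.of]; rfl

/-- The index-eight subgroup: the stabilizer of the coset `0`. -/
def K : Subgroup G := (MulAction.stabilizer (Equiv.Perm (Fin 8)) (0 : Fin 8)).comap rho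

theorem mem_K {g : G} : g ∈ K ↔ rho g 0 = 0 := Iff.rfl

/-- Representatives `rep i` of the cosets: `rep i` carries the coset `0` to `i`. They form a Schreier
transversal: each one other than `1` is a generator times another one. -/
def rep : Fin 8 → G := ![1, x * y * w, y * w, z * w, w, v * y * w, x * w, x]

theorem rho_rep (i : Fin 8) : rho (rep i) 0 = i := by
  fin_cases i <;> simp [rep, v, w, x, y, z, rho_of, act]

theorem index_K : K.index = 8 := by
  let _ : MulAction G (Fin 8) := MulAction.compHom _ rho
  have : MulAction.IsPretransitive G (Fin 8) :=
    (MulAction.isPretransitive_iff_base (0 : Fin 8)).2 fun i => ⟨rep i, rho_rep i⟩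
  have h := MulAction.index_stabilizer_of_transitive G (0 : Fin 8)
  rw [Nat.card_fin] at h
  exact h

/-! ### The `A`-valued cocycle -/

/-- The permutation of `A × Fin 8` that acts on `Fin 8` as the generator `g` and translates the
fibre `A` over `i` by `val g i`. These permutations encode a crossed homomorphism as an ordinary
homomorphism, so that it can be defined on the presented group. -/
def affine (g : Gen) : Equiv.Perm (A × Fin 8) where
  toFun p := (p.1 + val g p.2, act g p.2)
  invFun p := (p.1 - val g (actInv g p.2), actInv g p.2)
  left_inv p := by
    have h : actInv g (act g p.2) = p.2 := (perm g).left_inv p.2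
    simp [h]
  right_inv p := by
    have h : act g (actInv g p.2) = p.2 := (perm g).right_inv p.2
    simp [h]

theorem affine_apply (g : Gen) (a : A) (i : Fin 8) :
    affine g (a, i) = (a + val g i, act g i) := rfl

/-- The additive system of `exists_factor`, satisfied by `val` itself. -/
theorem val_relators (i : Fin 8) :
    (val .w (act .u (act .x i)) + val .u (act .x i) + val .x i = val .v (act .y i) + val .y i) ∧
    (val .x (act .u (act .y i)) + val .u (act .y i) + val .y i = val .w (act .z i) + val .z i) ∧
    (val .y (act .u (act .z i)) + val .u (act .z i) + val .z i = val .x (act .v i) + val .v i) ∧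
    (val .z (act .u (act .v i)) + val .u (act .v i) + val .v i = val .y (act .w i) + val .w i) ∧
    (val .v (act .u (act .w i)) + val .u (act .w i) + val .w i = val .z (act .x i) + val .x i) ∧
    (val .v (act .x (act .z (act .w (act .y i)))) + val .x (act .z (act .w (act .y i))) +
      val .z (act .w (act .y i)) + val .w (act .y i) + val .y i = 0) := by
  revert i; decide +kernel

theorem act_relators (i : Fin 8) :
    act .w (act .u (act .x i)) = act .v (act .y i) ∧
    act .x (act .u (act .y i)) = act .w (act .z i) ∧
    act .y (act .u (act .z i)) = act .x (act .v i) ∧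
    act .z (act .u (act .v i)) = act .y (act .w i) ∧
    act .v (act .u (act .w i)) = act .z (act .x i) ∧
    act .v (act .x (act .z (act .w (act .y i)))) = i := by
  revert i; decide

/-- The action of `G` on `A × Fin 8` lifting its action on `Fin 8`. -/
def alpha : G →* Equiv.Perm (A × Fin 8) := by
  refine PresentedGroup.toGroup (f := affine) (lift_relators affine ?_ ?_ ?_ ?_ ?_ ?_) <;>
  · refine Equiv.ext fun ⟨a, i⟩ => ?_
    obtain ⟨v1, v2, v3, v4, v5, v6⟩ := val_relators i
    obtain ⟨a1, a2, a3, a4, a5, a6⟩ := act_relators i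
    simp only [Equiv.Perm.mul_apply, affine_apply, Prod.mk.injEq, Equiv.Perm.one_apply]
    constructor
    · grind
    · assumption

/-- Every property that holds for the generators and is closed under products and inverses holds
on `G`. -/
theorem G_induction {P : G → Prop} (of : ∀ g : Gen, P (PresentedGroup.of g)) (one : P 1)
    (mul : ∀ g h, P g → P h → P (g * h)) (inv : ∀ g, P g → P g⁻¹) (g : G) : P g := by
  have hg : g ∈ Subgroup.closure (Set.range (PresentedGroup.of (rels := wsRels))) := by
    rw [PresentedGroup.closure_range_of]; trivial
  induction hg using Subgroup.closure_induction with
  | mem g hg => obtain ⟨a, rfl⟩ := hg; exact of a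
  | one => exact one
  | mul g h _ _ hg hh => exact mul g h hg hh
  | inv g _ hg => exact inv g hg

/-- Crossed homomorphisms from `G` to the `B`-valued functions on the eight cosets. -/
def IsCocycle {B : Type*} [AddCommGroup B] (c : G → Fin 8 → B) : Prop :=
  ∀ g h i, c (g * h) i = c g (rho h i) + c h i

namespace IsCocycle

variable {B : Type*} [AddCommGroup B] {c d : G → Fin 8 → B}

theorem map_one (hc : IsCocycle c) (i : Fin 8) : c 1 i = 0 := by
  simpa using hc 1 1 i

theorem map_inv (hc : IsCocycle c) (g : G) (i : Fin 8) : c g⁻¹ i = -c g (rho g⁻¹ i) := by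
  have h := hc g g⁻¹ i
  rw [mul_inv_cancel, hc.map_one] at h
  exact eq_neg_of_add_eq_zero_right h.symm

/-- A cocycle is determined by its values on the generators. -/
theorem ext (hc : IsCocycle c) (hd : IsCocycle d)
    (h : ∀ g i, c (PresentedGroup.of g) i = d (PresentedGroup.of g) i) (g : G) :
    ∀ i, c g i = d g i := by
  induction g using G_induction with
  | of g => exact h g
  | one => intro i; rw [hc.map_one, hd.map_one]
  | mul g h hg hh => intro i; rw [hc, hd, hg, hh]
  | inv g hg => intro i; rw [hc.map_inv, hd.map_inv, hg]

end IsCocycle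

/-- The cocycle of the action `alpha`: the translation that `g` performs on the fibre over `i`. -/
def delta (g : G) (i : Fin 8) : A := (alpha g (0, i)).1

theorem alpha_of (g : Gen) (a : A) (i : Fin 8) :
    alpha (PresentedGroup.of g) (a, i) = (a + val g i, act g i) := by
  rw [alpha, PresentedGroup.toGroup.of, affine_apply]

theorem alpha_apply (g : G) :
    ∀ (a : A) (i : Fin 8), alpha g (a, i) = (a + delta g i, rho g i) := by
  induction g using G_induction with
  | of g => intro a i; rw [delta, alpha_of, alpha_of, rho_of, zero_add]
  | one => intro a i; simp [delta]
  | mul g h hg hh =>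
    intro a i
    have h0 : delta (g * h) i = delta h i + delta g (rho h i) := by
      rw [delta, map_mul, Equiv.Perm.mul_apply, hh, hg, zero_add]
    rw [map_mul, map_mul, Equiv.Perm.mul_apply, Equiv.Perm.mul_apply, hh, hg, h0, add_assoc]
  | inv g hg =>
    have key (a : A) (i : Fin 8) :
        alpha g⁻¹ (a, i) = (a - delta g (rho g⁻¹ i), rho g⁻¹ i) := by
      rw [_root_.map_inv, Equiv.Perm.inv_eq_iff_eq, hg, sub_add_cancel, ← Equiv.Perm.mul_apply,
        ← map_mul, mul_inv_cancel, _root_.map_one, Equiv.Perm.one_apply]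
    intro a i
    have h0 : delta g⁻¹ i = -delta g (rho g⁻¹ i) := by rw [delta, key, zero_sub]
    rw [key, h0, sub_eq_add_neg]

theorem isCocycle_delta : IsCocycle delta := by
  intro g h i
  rw [delta, map_mul, Equiv.Perm.mul_apply, alpha_apply, alpha_apply, zero_add, add_comm]

theorem delta_of (g : Gen) (i : Fin 8) : delta (PresentedGroup.of g) i = val g i := by
  rw [delta, alpha_of, zero_add]

theorem delta_rep (i : Fin 8) : delta (rep i) 0 = 0 := by
  have h1 := isCocycle_delta.map_one 0
  fin_cases i <;>
    simp [rep, v, w, x, y, z, rho_of, act, isCocycle_delta _ _ _, delta_of, h1, val, coef]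

/-! ### The abelianization of the stabilizer -/

/-- On the stabilizer of `0` the cocycle, evaluated at `0`, is additive; this is the resulting
homomorphism `Kᵃᵇ → A`. -/
def psi : Abelianization K →* Multiplicative A :=
  Abelianization.lift
    { toFun := fun k => .ofAdd (delta k 0)
      map_one' := by simp [isCocycle_delta.map_one]
      map_mul' := fun g h => by
        rw [Subgroup.coe_mul, isCocycle_delta, mem_K.1 h.2, ofAdd_add] }

theorem psi_of (k : K) : psi (.of k) = .ofAdd (delta k 0) := rfl

/-- The element `rep (g i)⁻¹ g rep i` of `K`; for `g` a generator these are the Schreier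
generators. -/
def schreier (g : G) (i : Fin 8) : K :=
  ⟨(rep (rho g i))⁻¹ * g * rep i, by
    rw [mem_K, map_mul, map_mul, Equiv.Perm.mul_apply, Equiv.Perm.mul_apply, rho_rep, map_inv,
      Equiv.Perm.inv_eq_iff_eq, rho_rep]⟩

theorem schreier_mul (g h : G) (i : Fin 8) :
    schreier (g * h) i = schreier g (rho h i) * schreier h i := by
  ext
  simp only [schreier, Subgroup.coe_mul, map_mul, Equiv.Perm.mul_apply]
  group

/-- Edges of the Schreier tree give the trivial element. -/
theorem schreier_tree (g : Gen) (i : Fin 8) (h : rep (act g i) = PresentedGroup.of g * rep i) :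
    schreier (PresentedGroup.of g) i = 1 := by
  ext
  simp [schreier, rho_of, h]

theorem schreier_base (k : K) : schreier k 0 = k := by
  ext
  simp [schreier, mem_K.1 k.2, rep]

theorem delta_schreier (g : G) (i : Fin 8) : delta (schreier g i) 0 = delta g i := by
  have h : delta (rep (rho g i))⁻¹ (rho g i) = 0 := by
    rw [isCocycle_delta.map_inv, map_inv, Equiv.Perm.inv_eq_iff_eq.2 (rho_rep _).symm, delta_rep,
      neg_zero]
  rw [schreier, isCocycle_delta, isCocycle_delta, delta_rep, rho_rep, h, zero_add, add_zero]

/-- The universal `Kᵃᵇ`-valued cocycle, given by the Schreier elements, factors through `delta`. -/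
theorem factor : ∃ E : A →+ Additive (Abelianization K),
    ∀ g i, Additive.ofMul (Abelianization.of (schreier g i)) = E (delta g i) := by
  let c (g : G) (i : Fin 8) : Additive (Abelianization K) :=
    Additive.ofMul (Abelianization.of (schreier g i))
  have hc : IsCocycle c := fun g h i => by
    simp only [c, schreier_mul, map_mul, ofMul_mul]
  have tree (g : Gen) (i : Fin 8) (h : rep (act g i) = PresentedGroup.of g * rep i) :
      c (PresentedGroup.of g) i = 0 := by
    simp [c, schreier_tree g i h]
  obtain ⟨h1, h2, h3, h4, h5, h6⟩ := relators_G
  obtain ⟨E, hE⟩ := exists_factor (fun g i => c (PresentedGroup.of g) i)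
    (fun i => by simpa only [hc _ _ _, rho_of, u, v, w, x, y, z] using congrArg (c · i) h1)
    (fun i => by simpa only [hc _ _ _, rho_of, u, v, w, x, y, z] using congrArg (c · i) h2)
    (fun i => by simpa only [hc _ _ _, rho_of, u, v, w, x, y, z] using congrArg (c · i) h3)
    (fun i => by simpa only [hc _ _ _, rho_of, u, v, w, x, y, z] using congrArg (c · i) h4)
    (fun i => by simpa only [hc _ _ _, rho_of, u, v, w, x, y, z] using congrArg (c · i) h5)
    (fun i => by simpa only [hc _ _ _, hc.map_one, rho_of, u, v, w, x, y, z]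
                  using congrArg (c · i) h6)
    (tree _ _ (mul_one _).symm) (tree _ _ rfl) (tree _ _ (mul_one _).symm) (tree _ _ rfl)
    (tree _ _ (mul_assoc _ _ _)) (tree _ _ rfl) (tree _ _ (mul_assoc _ _ _))
  have hd : IsCocycle fun g i => E (delta g i) := fun g h i => by
    simp only [isCocycle_delta g h i, map_add]
  exact ⟨E, hc.ext hd fun g i => by rw [delta_of]; exact hE g i⟩

theorem psi_injective : Function.Injective psi := by
  obtain ⟨E, hE⟩ := factor
  -- a left inverse of `psi`
  have h (q : Abelianization K) : Additive.ofMul q = E (psi q).toAdd := by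
    obtain ⟨k, rfl⟩ := QuotientGroup.mk_surjective q
    change Additive.ofMul (Abelianization.of k) = E (psi (Abelianization.of k)).toAdd
    rw [psi_of, toAdd_ofAdd, ← hE, schreier_base]
  intro q r hqr
  exact Additive.ofMul.injective (by rw [h, h, hqr])

theorem psi_surjective : Function.Surjective psi := by
  have hv (g : Gen) (i : Fin 8) : val g i ∈ psi.toAdditiveLeft.range :=
    ⟨.ofMul (.of (schreier (PresentedGroup.of g) i)), by
      change delta (schreier (PresentedGroup.of g) i) 0 = _
      rw [delta_schreier, delta_of]⟩
  -- the generators of `A` are values of `val`, or sums of two of them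
  have b0 : ((1, 0, 0, 0) : A) ∈ psi.toAdditiveLeft.range := hv .u 3
  have b1 : ((0, 1, 0, 0) : A) ∈ psi.toAdditiveLeft.range := by
    convert add_mem (hv .z 7) (hv .w 1) using 1; decide
  have b2 : ((0, 0, 1, 0) : A) ∈ psi.toAdditiveLeft.range := by
    convert add_mem (hv .x 7) (hv .v 6) using 1; decide
  have b3 : ((0, 0, 0, 1) : A) ∈ psi.toAdditiveLeft.range := by
    convert add_mem (hv .w 5) (hv .z 2) using 1; decide
  intro a
  obtain ⟨⟨n, p, q, r⟩, rfl⟩ := Multiplicative.ofAdd.surjective a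
  have h := add_mem (add_mem (zsmul_mem b0 n) (nsmul_mem b1 p.val))
    (add_mem (nsmul_mem b2 q.val) (nsmul_mem b3 r.val))
  have e : n • ((1, 0, 0, 0) : A) + p.val • ((0, 1, 0, 0) : A) +
      (q.val • ((0, 0, 1, 0) : A) + r.val • ((0, 0, 0, 1) : A)) = (n, p, q, r) := by
    simp
  rw [e] at h
  obtain ⟨k, hk⟩ := h
  exact ⟨k.toMul, hk⟩

/-- The Chinese remainder theorem, regrouping `A` into factors of prime order. -/
theorem exists_crt :
    Nonempty (A ≃+ ℤ × (Fin 3 → ZMod 2) × (Fin 2 → ZMod 3) × (Fin 3 → ZMod 5)) := by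
  let f (m n : ℕ) (h : m ∣ n) : ZMod n →+ ZMod m := (ZMod.castHom h (ZMod m)).toAddMonoidHom
  let F : ZMod 30 × ZMod 30 × ZMod 10 →+
      (Fin 3 → ZMod 2) × (Fin 2 → ZMod 3) × (Fin 3 → ZMod 5) :=
    { toFun := fun a =>
        (![f 2 30 (by decide) a.1, f 2 30 (by decide) a.2.1, f 2 10 (by decide) a.2.2],
          ![f 3 30 (by decide) a.1, f 3 30 (by decide) a.2.1],
          ![f 5 30 (by decide) a.1, f 5 30 (by decide) a.2.1, f 5 10 (by decide) a.2.2])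
      map_zero' := by simp
      map_add' := fun a b => by simp }
  have crt30 (a : ZMod 30) : f 2 30 (by decide) a = 0 → f 3 30 (by decide) a = 0 →
      f 5 30 (by decide) a = 0 → a = 0 := by
    revert a; decide
  have crt10 (a : ZMod 10) : f 2 10 (by decide) a = 0 → f 5 10 (by decide) a = 0 → a = 0 := by
    revert a; decide
  have hF : Function.Injective F := by
    rw [injective_iff_map_eq_zero]
    rintro ⟨a, b, c⟩ h
    have h2 : ![f 2 30 (by decide) a, f 2 30 (by decide) b, f 2 10 (by decide) c] = 0 :=
      congrArg Prod.fst h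
    have h3 : ![f 3 30 (by decide) a, f 3 30 (by decide) b] = 0 := congrArg (fun d => d.2.1) h
    have h5 : ![f 5 30 (by decide) a, f 5 30 (by decide) b, f 5 10 (by decide) c] = 0 :=
      congrArg (fun d => d.2.2) h
    rw [crt30 a (congrFun h2 0) (congrFun h3 0) (congrFun h5 0),
      crt30 b (congrFun h2 1) (congrFun h3 1) (congrFun h5 1),
      crt10 c (congrFun h2 2) (congrFun h5 2)]
    rfl
  have hF' : Function.Bijective F := by
    rw [Fintype.bijective_iff_injective_and_card]
    exact ⟨hF, by simp [ZMod.card]⟩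
  exact ⟨(AddEquiv.refl ℤ).prodCongr (AddEquiv.ofBijective F hF')⟩

/-- `G` has a subgroup of index 8 whose abelianization is
`ℤ × (ℤ/2ℤ)³ × (ℤ/3ℤ)² × (ℤ/5ℤ)³`. -/
theorem ws_index_eight_cover :
    ∃ K : Subgroup G, K.index = 8 ∧
      Nonempty (Abelianization K ≃*
        Multiplicative (ℤ × (Fin 3 → ZMod 2) × (Fin 2 → ZMod 3) × (Fin 3 → ZMod 5))) := by
  obtain ⟨e⟩ := exists_crt
  exact ⟨K, index_K, ⟨(MulEquiv.ofBijective psi ⟨psi_injective, psi_surjective⟩).trans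
    e.toMultiplicative⟩⟩
end

section
/- The group P is isomorphic to SL(2, ℤ/5ℤ), the binary icosahedral group of order 120. In particular, the abelianization of P is trivial. -/
/-!
Put `b = u⁻¹`. The relators express `y, z, v, w` through `b` and `x`, and reduce to
`b x b = x b x` and `x b² x = b³` (`BraidPair`). The braid relation turns the second one into
`b⁵ = (b x b)²`, which is central. With `ω = x² b⁻¹ x` one finds `b ω b = ω`, so conjugation by `ω`
sends the central element `b⁵` to its inverse; hence `b¹⁰ = 1`. Moreover every element has one of the
four shapes `bⁱ`, `bⁱ x bʲ`, `bⁱ x² bʲ`, `bⁱ ω` (`BraidPair.isNormal_of_mem_closure`).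

The matrices `-(1 1; 0 1)` and `-(1 0; -1 1)` satisfy the relations of `b` and `x`, which defines
`toSL : P →* SL(2, ℤ/5ℤ)`. Among the four shapes, only powers of `b` with exponent divisible by `10`
have trivial image: the images of `x` and `x²` are not upper triangular, and that of `ω` is upper
triangular with diagonal entries other than `±1`. So `toSL` is injective. It is surjective because
the two matrices generate all elementary transvections. In an abelian quotient the relations
read `b = x` and `x² b² = b³`, so `b = x = 1`.
-/

/-- Generators of the fundamental group of the Poincaré homology sphere, one for each
pentagon of the dodecahedral decomposition. -/
inductive PGen : Type
  | u | v | w | x | y | z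
  deriving DecidableEq

open FreeGroup in
/-- The ten relators, one for each edge of the dodecahedral decomposition. -/
def poincareRels : Set (FreeGroup PGen) :=
  { of .u * of .x * of .z,
    of .u * of .y * of .v,
    of .u * of .z * of .w,
    of .u * of .v * of .x,
    of .u * of .w * of .y,
    of .x * (of .y)⁻¹ * of .z,
    of .y * (of .z)⁻¹ * of .v,
    of .z * (of .v)⁻¹ * of .w,
    of .v * (of .w)⁻¹ * of .x,
    of .w * (of .x)⁻¹ * of .y }

/-- The fundamental group of the Poincaré homology sphere. -/
abbrev P : Type := PresentedGroup poincareRels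

/-! ### Consequences of the braid and cube relations -/

/-- The relations between `b = u⁻¹` and `x` to which the ten relators of `P` reduce. -/
structure BraidPair {G : Type*} [Group G] (b x : G) : Prop where
  braid : b * x * b = x * b * x
  cube : x * b ^ 2 * x = b ^ 3

namespace BraidPair

variable {G : Type*} [Group G] {b x : G}

/-- Conjugation by `b x b` exchanges `b` and `x`, and its square is `b⁵`, so `b⁵` commutes with
`x`. -/
theorem commute_pow_five (h : BraidPair b x) : Commute (b ^ 5) x := by
  have h5 : b ^ 5 = (b * x * b) * (b * x * b) := by
    calc b ^ 5 = b * b ^ 3 * b := by simp [pow_succ, mul_assoc]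
      _ = b * (x * b ^ 2 * x) * b := by rw [h.cube]
      _ = _ := by simp [pow_succ, mul_assoc]
  have h1 : (b * x * b) * b = x * (b * x * b) := by
    nth_rw 1 [h.braid]; simp [mul_assoc]
  have h2 : (b * x * b) * x = b * (b * x * b) := by
    nth_rw 2 [h.braid]; simp [mul_assoc]
  change b ^ 5 * x = x * b ^ 5
  rw [h5, mul_assoc, h2, ← mul_assoc, h1, mul_assoc]

theorem commute_zpow_five (h : BraidPair b x) (n : ℤ) : Commute (b ^ (5 * n)) x := by
  have := h.commute_pow_five.zpow_left n
  rwa [← zpow_natCast, ← zpow_mul] at this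

theorem x_b_xinv (h : BraidPair b x) : x * b * x⁻¹ = b⁻¹ * x * b := by
  calc x * b * x⁻¹ = b⁻¹ * (b * x * b) * x⁻¹ := by group
    _ = _ := by rw [h.braid]; group

theorem b_sq_x (h : BraidPair b x) : b ^ 2 * x = x⁻¹ * b ^ 3 := by
  rw [← h.cube]; simp [pow_succ, mul_assoc]

theorem x_inv (h : BraidPair b x) : x⁻¹ = b ^ (-3 : ℤ) * x * b ^ (2 : ℤ) := by
  have : x * b ^ 2 = b ^ 3 * x⁻¹ := by rw [← h.cube]; simp [pow_succ, mul_assoc]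
  calc x⁻¹ = b ^ (-3 : ℤ) * (b ^ 3 * x⁻¹) := by simp [pow_succ, mul_assoc]
    _ = _ := by rw [← this]; simp [pow_succ, mul_assoc]

theorem x_b_cube_x (h : BraidPair b x) : x * b ^ 3 * x = b⁻¹ * x * b ^ 4 := by
  calc x * b ^ 3 * x = x * b * (b ^ 2 * x) := by simp [pow_succ, mul_assoc]
    _ = (x * b * x⁻¹) * b ^ 3 := by rw [h.b_sq_x]; simp [pow_succ, mul_assoc]
    _ = _ := by rw [h.x_b_xinv]; simp [pow_succ, mul_assoc]

/-- The mirror image of `cube` under exchanging `b` and `x`. -/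
theorem x_cube (h : BraidPair b x) : x ^ 3 = b * x ^ 2 * b := by
  have h1 : (b * x * b) * b * (b * x * b)⁻¹ = x := by
    rw [mul_inv_eq_iff_eq_mul]; nth_rw 1 [h.braid]; simp [mul_assoc]
  have h2 : (b * x * b) * x * (b * x * b)⁻¹ = b := by
    rw [mul_inv_eq_iff_eq_mul]; nth_rw 2 [h.braid]; simp [mul_assoc]
  have := congrArg (MulAut.conj (b * x * b)) h.cube
  rw [map_mul, map_mul, map_pow, map_pow, MulAut.conj_apply, MulAut.conj_apply, h1, h2] at this
  exact this.symm

theorem x_binv_x (h : BraidPair b x) : x * b⁻¹ * x = b⁻¹ * x ^ 2 * b⁻¹ := by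
  have h1 : x⁻¹ * b * x = b * x * b⁻¹ := by
    rw [eq_mul_inv_iff_mul_eq, mul_assoc, mul_assoc, inv_mul_eq_iff_eq_mul, ← mul_assoc,
      ← mul_assoc, h.braid]
  have h2 : x ^ 2 = (b * x * b⁻¹) * x * b := by
    calc x ^ 2 = x⁻¹ * x ^ 3 := by simp [pow_succ, mul_assoc]
      _ = (x⁻¹ * b * x) * x * b := by rw [h.x_cube]; simp [pow_succ, mul_assoc]
      _ = _ := by rw [h1]
  rw [h2]; simp [mul_assoc]

/-- The element `ω = x² b⁻¹ x` inverts `b`. -/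
theorem omega_b (h : BraidPair b x) :
    x ^ 2 * b⁻¹ * x * b = b⁻¹ * (x ^ 2 * b⁻¹ * x) := by
  calc x ^ 2 * b⁻¹ * x * b = x * (x * b⁻¹ * x) * b := by simp [pow_succ, mul_assoc]
    _ = (x * b⁻¹ * x) * x := by nth_rw 1 [h.x_binv_x]; simp [pow_succ, mul_assoc]
    _ = _ := by rw [h.x_binv_x]; simp [pow_succ, mul_assoc]

theorem omega_b_zpow (h : BraidPair b x) (n : ℤ) :
    x ^ 2 * b⁻¹ * x * b ^ n = b ^ (-n) * (x ^ 2 * b⁻¹ * x) := by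
  have : SemiconjBy (x ^ 2 * b⁻¹ * x) b b⁻¹ := h.omega_b
  simpa using (this.zpow_right n).eq

theorem omega_x (h : BraidPair b x) :
    x ^ 2 * b⁻¹ * x * x = b ^ 2 * x ^ 2 * b ^ 2 := by
  have h1 : b⁻¹ * x ^ 2 = x * b⁻¹ * x * b := by rw [h.x_binv_x]; simp [pow_succ, mul_assoc]
  calc x ^ 2 * b⁻¹ * x * x = x ^ 2 * (b⁻¹ * x ^ 2) := by simp [pow_succ, mul_assoc]
    _ = x ^ 3 * b⁻¹ * x * b := by rw [h1]; simp [pow_succ, mul_assoc]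
    _ = b * x ^ 3 * b := by rw [h.x_cube]; nth_rw 2 [← h.x_cube]; simp [pow_succ, mul_assoc]
    _ = _ := by rw [h.x_cube]; simp [pow_succ, mul_assoc]

/-- `b⁵` is central, and `ω` conjugates it to its inverse. -/
theorem b_pow_ten (h : BraidPair b x) : b ^ 10 = 1 := by
  have hc : Commute (x ^ 2 * b⁻¹ * x) (b ^ (5 : ℤ)) := by
    have hx : Commute x (b ^ (5 : ℤ)) := (h.commute_zpow_five 1).symm
    have hb : Commute b⁻¹ (b ^ (5 : ℤ)) := ((Commute.refl b).zpow_right 5).inv_left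
    exact ((hx.pow_left 2).mul_left hb).mul_left hx
  have h1 := h.omega_b_zpow 5
  rw [hc.eq] at h1
  have h2 := mul_right_cancel h1
  calc b ^ 10 = b ^ (5 : ℤ) * b ^ (5 : ℤ) := by simp [pow_succ, mul_assoc]
    _ = 1 := by nth_rw 1 [h2]; simp [pow_succ, mul_assoc]

/-! ### Normal forms -/

/-- The shapes covering the group generated by `b` and `x`. Up to left multiplication by powers of
`b` there are twelve of them, as `bʲ` matters only for `j` modulo `5`. -/
inductive IsNormal (b x : G) : G → Prop
  | pow (i : ℤ) : IsNormal b x (b ^ i)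
  | x (i j : ℤ) : IsNormal b x (b ^ i * x * b ^ j)
  | xx (i j : ℤ) : IsNormal b x (b ^ i * x ^ 2 * b ^ j)
  | omega (i : ℤ) : IsNormal b x (b ^ i * (x ^ 2 * b⁻¹ * x))

theorem IsNormal.mul_b (h : BraidPair b x) {g : G} (hg : IsNormal b x g) (n : ℤ) :
    IsNormal b x (g * b ^ n) := by
  cases hg with
  | pow i => rw [← zpow_add]; exact .pow _
  | x i j => rw [mul_assoc, ← zpow_add]; exact .x _ _
  | xx i j => rw [mul_assoc, ← zpow_add]; exact .xx _ _
  | omega i => rw [mul_assoc, h.omega_b_zpow, ← mul_assoc, ← zpow_add]; exact .omega _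

theorem IsNormal.b_mul {g : G} (hg : IsNormal b x g) (n : ℤ) :
    IsNormal b x (b ^ n * g) := by
  cases hg with
  | pow i => rw [← zpow_add]; exact .pow _
  | x i j => rw [← mul_assoc, ← mul_assoc, ← zpow_add]; exact .x _ _
  | xx i j => rw [← mul_assoc, ← mul_assoc, ← zpow_add]; exact .xx _ _
  | omega i => rw [← mul_assoc, ← zpow_add]; exact .omega _

/-- The exponent of `b` between two powers of `x` matters only modulo `5`; the representatives
`-1, …, 3` are the ones for which the relations apply directly. -/
theorem isNormal_of_forall_small (h : BraidPair b x) (p : G)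
    (hp : ∀ j ∈ Finset.Icc (-1 : ℤ) 3, IsNormal b x (p * b ^ j * x))
    (i j : ℤ) : IsNormal b x (b ^ i * p * b ^ j * x) := by
  obtain ⟨q, r, hr, rfl⟩ : ∃ q r : ℤ, r ∈ Finset.Icc (-1 : ℤ) 3 ∧ j = r + 5 * q :=
    ⟨(j + 1) / 5, (j + 1) % 5 - 1, by rw [Finset.mem_Icc]; omega, by omega⟩
  have h1 : b ^ i * p * b ^ (r + 5 * q) * x = b ^ i * (p * b ^ r * x) * b ^ (5 * q) := by
    rw [zpow_add]
    simp only [mul_assoc, (h.commute_zpow_five q).eq]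
  rw [h1]
  exact ((hp r hr).b_mul i).mul_b h _

theorem IsNormal.mul_x (h : BraidPair b x) {g : G} (hg : IsNormal b x g) :
    IsNormal b x (g * x) := by
  cases hg with
  | pow i => simpa using IsNormal.x (b := b) (x := x) i 0
  | x i j =>
    refine isNormal_of_forall_small h x (fun j hj => ?_) i j
    rw [Finset.mem_Icc] at hj
    obtain ⟨h1, h2⟩ := hj
    interval_cases j
    · convert IsNormal.xx (b := b) (x := x) (-1) (-1) using 1
      simpa using h.x_binv_x
    · convert IsNormal.xx (b := b) (x := x) 0 0 using 1
      simp [pow_succ]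
    · convert IsNormal.x (b := b) (x := x) 1 1 using 1
      simpa using h.braid.symm
    · convert IsNormal.pow (b := b) (x := x) 3 using 1
      exact_mod_cast h.cube
    · convert IsNormal.x (b := b) (x := x) (-1) 4 using 1
      have := h.x_b_cube_x
      rw [zpow_neg_one]
      exact_mod_cast this
  | xx i j =>
    refine isNormal_of_forall_small h (x ^ 2) (fun j hj => ?_) i j
    rw [Finset.mem_Icc] at hj
    obtain ⟨h1, h2⟩ := hj
    interval_cases j
    · convert IsNormal.omega (b := b) (x := x) 0 using 1
      simp [pow_succ, mul_assoc]
    · convert IsNormal.xx (b := b) (x := x) 1 1 using 1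
      simpa [pow_succ] using h.x_cube
    · convert IsNormal.x (b := b) (x := x) 1 2 using 1
      calc x ^ 2 * b ^ (1 : ℤ) * x = x * (x * b * x) := by simp [pow_succ, mul_assoc]
        _ = (x * b * x) * b := by nth_rw 1 [← h.braid]; simp [mul_assoc]
        _ = _ := by rw [← h.braid]; simp [pow_succ, mul_assoc]
    · convert IsNormal.x (b := b) (x := x) 0 3 using 1
      calc x ^ 2 * b ^ (2 : ℤ) * x = x * (x * b ^ 2 * x) := by simp [pow_succ, mul_assoc]
        _ = _ := by rw [h.cube]; simp [pow_succ, mul_assoc]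
    · convert IsNormal.xx (b := b) (x := x) (-1) 3 using 1
      calc x ^ 2 * b ^ (3 : ℤ) * x = x * (x * b ^ 3 * x) := by simp [pow_succ, mul_assoc]
        _ = (x * b⁻¹ * x) * b ^ 4 := by rw [h.x_b_cube_x]; simp [pow_succ, mul_assoc]
        _ = _ := by rw [h.x_binv_x]; simp [pow_succ, mul_assoc]
  | omega i =>
    rw [mul_assoc, h.omega_x]
    exact_mod_cast (IsNormal.xx (b := b) (x := x) 2 2).b_mul i

theorem isNormal_of_mem_closure (h : BraidPair b x) {g : G}
    (hg : g ∈ Subgroup.closure {b, x}) : IsNormal b x g := by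
  induction hg using Subgroup.closure_induction_right with
  | one => simpa using IsNormal.pow (b := b) (x := x) 0
  | mul_right g _ s hs ih =>
    rcases hs with rfl | rfl
    · simpa using ih.mul_b h 1
    · exact ih.mul_x h
  | mul_inv_cancel g _ s hs ih =>
    rcases hs with rfl | rfl
    · simpa using ih.mul_b h (-1)
    · rw [h.x_inv, ← mul_assoc, ← mul_assoc]
      exact ((ih.mul_b h _).mul_x h).mul_b h _

end BraidPair

/-! ### Reduction of `P` to two generators -/

/-- The generator `b = u⁻¹` of `P`. -/
def bP : P := (PresentedGroup.of .u)⁻¹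

/-- The generator `x` of `P`. -/
def xP : P := PresentedGroup.of .x

theorem rel_eq_one {r : FreeGroup PGen} (hr : r ∈ poincareRels) :
    PresentedGroup.mk poincareRels r = 1 :=
  PresentedGroup.one_of_mem hr

theorem of_z : (PresentedGroup.of .z : P) = xP⁻¹ * bP := by
  have h : (PresentedGroup.of .u : P) * PresentedGroup.of .x * PresentedGroup.of .z = 1 :=
    rel_eq_one (by simp [poincareRels])
  rw [eq_inv_of_mul_eq_one_right h, mul_inv_rev]; rfl

theorem of_v : (PresentedGroup.of .v : P) = bP * xP⁻¹ := by
  have h : (PresentedGroup.of .u : P) * PresentedGroup.of .v * PresentedGroup.of .x = 1 :=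
    rel_eq_one (by simp [poincareRels])
  rw [mul_assoc] at h
  exact eq_mul_inv_of_mul_eq (eq_inv_of_mul_eq_one_right h)

theorem of_y : (PresentedGroup.of .y : P) = xP⁻¹ * bP * xP := by
  have h : (PresentedGroup.of .x : P) * (PresentedGroup.of .y)⁻¹ * PresentedGroup.of .z = 1 :=
    rel_eq_one (by simp [poincareRels])
  calc (PresentedGroup.of .y : P)
      = PresentedGroup.of .z * (PresentedGroup.of .x * (PresentedGroup.of .y)⁻¹ *
          PresentedGroup.of .z)⁻¹ * PresentedGroup.of .x := by group
    _ = _ := by rw [h, of_z, inv_one, mul_one]; rfl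

theorem of_w : (PresentedGroup.of .w : P) = bP * xP⁻¹ * bP⁻¹ * xP := by
  have h : (PresentedGroup.of .z : P) * (PresentedGroup.of .v)⁻¹ * PresentedGroup.of .w = 1 :=
    rel_eq_one (by simp [poincareRels])
  rw [eq_inv_of_mul_eq_one_right h, of_z, of_v]
  group

/-- The relator `u y v` gives the braid relation, and `u z w` the cube relation. -/
theorem braidPair : BraidPair bP xP := by
  have hu : (PresentedGroup.of .u : P) = bP⁻¹ := (inv_inv _).symm
  have hbraid : bP * xP * bP = xP * bP * xP := by
    have h : (PresentedGroup.of .u : P) * PresentedGroup.of .y * PresentedGroup.of .v = 1 :=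
      rel_eq_one (by simp [poincareRels])
    rw [hu, of_y, of_v] at h
    calc bP * xP * bP = xP * bP * (bP⁻¹ * (xP⁻¹ * bP * xP) * (bP * xP⁻¹)) * xP := by group
      _ = _ := by rw [h]; group
  refine ⟨hbraid, ?_⟩
  have h : (PresentedGroup.of .u : P) * PresentedGroup.of .z * PresentedGroup.of .w = 1 :=
    rel_eq_one (by simp [poincareRels])
  rw [hu, of_z, of_w] at h
  calc xP * bP ^ 2 * xP = (bP * xP * bP) * xP⁻¹ * bP * xP := by
        rw [hbraid]; simp [pow_succ, mul_assoc]
    _ = bP * (xP * bP * (bP⁻¹ * (xP⁻¹ * bP) * (bP * xP⁻¹ * bP⁻¹ * xP)) * xP⁻¹ * bP * xP) := by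
        rw [h]; simp [mul_assoc]
    _ = _ := by simp [pow_succ, mul_assoc]

theorem closure_bP_xP : Subgroup.closure {bP, xP} = (⊤ : Subgroup P) := by
  have hb : bP ∈ Subgroup.closure {bP, xP} := Subgroup.subset_closure (by simp)
  have hx : xP ∈ Subgroup.closure {bP, xP} := Subgroup.subset_closure (by simp)
  rw [eq_top_iff, ← PresentedGroup.closure_range_of poincareRels, Subgroup.closure_le]
  rintro _ ⟨g, rfl⟩
  cases g with
  | u => exact inv_mem_iff.mp hb
  | x => exact hx
  | y => rw [of_y]; exact mul_mem (mul_mem (inv_mem hx) hb) hx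
  | z => rw [of_z]; exact mul_mem (inv_mem hx) hb
  | v => rw [of_v]; exact mul_mem hb (inv_mem hx)
  | w => rw [of_w]; exact mul_mem (mul_mem (mul_mem hb (inv_mem hx)) (inv_mem hb)) hx

/-! ### The homomorphism to `SL(2, ℤ/5ℤ)` -/

/-- The image of `b = u⁻¹` in `SL(2, ℤ/5ℤ)`. -/
def bM : Matrix.SpecialLinearGroup (Fin 2) (ZMod 5) := ⟨!![-1, -1; 0, -1], by decide⟩

/-- The image of `x` in `SL(2, ℤ/5ℤ)`. -/
def xM : Matrix.SpecialLinearGroup (Fin 2) (ZMod 5) := ⟨!![-1, 0; 1, -1], by decide⟩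

/-- The images of the six generators, expressed through `bM` and `xM` as the generators of `P` are
through `bP` and `xP`. -/
def genM : PGen → Matrix.SpecialLinearGroup (Fin 2) (ZMod 5)
  | .u => bM⁻¹
  | .v => bM * xM⁻¹
  | .w => bM * xM⁻¹ * bM⁻¹ * xM
  | .x => xM
  | .y => xM⁻¹ * bM * xM
  | .z => xM⁻¹ * bM

theorem lift_genM_rels : ∀ r ∈ poincareRels, FreeGroup.lift genM r = 1 := by
  intro r hr
  simp only [poincareRels, Set.mem_insert_iff, Set.mem_singleton_iff] at hr
  rcases hr with rfl | rfl | rfl | rfl | rfl | rfl | rfl | rfl | rfl | rfl <;>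
    simp only [map_mul, map_inv, FreeGroup.lift_apply_of] <;> decide

/-- The homomorphism `P →* SL(2, ℤ/5ℤ)` which turns out to be an isomorphism. -/
def toSL : P →* Matrix.SpecialLinearGroup (Fin 2) (ZMod 5) :=
  PresentedGroup.toGroup lift_genM_rels

theorem toSL_bP : toSL bP = bM := by
  simp only [bP, toSL, map_inv, PresentedGroup.toGroup.of, genM, inv_inv]

theorem toSL_xP : toSL xP = xM := by
  simp only [xP, toSL, PresentedGroup.toGroup.of, genM]

theorem orderOf_bM : orderOf bM = 10 := by
  rw [orderOf_eq_iff (by norm_num)]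
  decide

/-- Powers of `bM` are upper triangular with diagonal entries `±1`. -/
theorem bM_zpow_entries (n : ℤ) : (bM ^ n) 1 0 = 0 ∧ (bM ^ n) 0 0 ^ 2 = 1 := by
  rw [← zpow_mod_orderOf, orderOf_bM]
  have h1 := Int.emod_nonneg n (show ((10 : ℕ) : ℤ) ≠ 0 by decide)
  have h2 := Int.emod_lt_of_pos n (show (0 : ℤ) < (10 : ℕ) by decide)
  generalize n % (10 : ℕ) = r at h1 h2
  interval_cases r <;> decide

theorem toSL_injective : Function.Injective toSL := by
  rw [injective_iff_map_eq_one]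
  intro g hg
  have hN : BraidPair.IsNormal bP xP g :=
    braidPair.isNormal_of_mem_closure (closure_bP_xP ▸ Subgroup.mem_top g)
  cases hN with
  | pow i =>
    rw [map_zpow, toSL_bP] at hg
    obtain ⟨k, rfl⟩ := orderOf_bM ▸ orderOf_dvd_iff_zpow_eq_one.mpr hg
    rw [zpow_mul]
    have : bP ^ (10 : ℤ) = 1 := by exact_mod_cast braidPair.b_pow_ten
    push_cast
    rw [this, one_zpow]
  | x i j =>
    simp only [map_mul, map_zpow, toSL_bP, toSL_xP] at hg
    have : xM = bM ^ (-i - j) := by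
      calc xM = bM ^ (-i) * (bM ^ i * xM * bM ^ j) * bM ^ (-j) := by group
        _ = _ := by rw [hg]; group
    exact absurd (this ▸ (bM_zpow_entries (-i - j)).1) (by decide)
  | xx i j =>
    simp only [map_mul, map_pow, map_zpow, toSL_bP, toSL_xP] at hg
    have : xM ^ 2 = bM ^ (-i - j) := by
      calc xM ^ 2 = bM ^ (-i) * (bM ^ i * xM ^ 2 * bM ^ j) * bM ^ (-j) := by group
        _ = _ := by rw [hg]; group
    exact absurd (this ▸ (bM_zpow_entries (-i - j)).1) (by decide)
  | omega i =>
    simp only [map_mul, map_pow, map_inv, map_zpow, toSL_bP, toSL_xP] at hg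
    have : xM ^ 2 * bM⁻¹ * xM = bM ^ (-i) := by
      rw [zpow_neg]; exact eq_inv_of_mul_eq_one_right hg
    exact absurd (this ▸ (bM_zpow_entries (-i)).2) (by decide)

/-! ### Surjectivity -/

/-- The upper unitriangular matrix `(1 t; 0 1)`. -/
def upper (t : ZMod 5) : Matrix.SpecialLinearGroup (Fin 2) (ZMod 5) :=
  ⟨!![1, t; 0, 1], by simp [Matrix.det_fin_two]⟩

/-- The lower unitriangular matrix `(1 0; t 1)`. -/
def lower (t : ZMod 5) : Matrix.SpecialLinearGroup (Fin 2) (ZMod 5) :=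
  ⟨!![1, 0; t, 1], by simp [Matrix.det_fin_two]⟩

/-- The even power `bM ^ 6` is `upper 1`, the sign of `bM` having cancelled. -/
theorem upper_mem (t : ZMod 5) : upper t ∈ toSL.range := by
  have h : upper t = bM ^ (6 * t.val) := by
    revert t; decide
  exact ⟨bP ^ (6 * t.val), by rw [map_pow, toSL_bP, h]⟩

/-- The even power `xM ^ 4` is `lower 1`, as `-4 = 1` in `ℤ/5ℤ`. -/
theorem lower_mem (t : ZMod 5) : lower t ∈ toSL.range := by
  have h : lower t = xM ^ (4 * t.val) := by
    revert t; decide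
  exact ⟨xP ^ (4 * t.val), by rw [map_pow, toSL_xP, h]⟩

/-- A matrix with nonzero lower left entry is a product upper · lower · upper of unitriangular
matrices. -/
theorem mem_range_of_ne_zero (A : Matrix.SpecialLinearGroup (Fin 2) (ZMod 5)) (hA : A 1 0 ≠ 0) :
    A ∈ toSL.range := by
  have : Fact (Nat.Prime 5) := ⟨by norm_num⟩
  have hdet : A 0 0 * A 1 1 - A 0 1 * A 1 0 = 1 := by
    rw [← Matrix.det_fin_two]; exact A.det_coe
  have h : A = upper ((A 0 0 - 1) / A 1 0) * lower (A 1 0) * upper ((A 1 1 - 1) / A 1 0) := by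
    ext i j
    rw [Matrix.SpecialLinearGroup.coe_mul, Matrix.SpecialLinearGroup.coe_mul]
    fin_cases i <;> fin_cases j <;>
      simp [upper, lower, Matrix.mul_apply, Fin.sum_univ_two] <;> field_simp <;>
      first | (ring; done) | linear_combination -hdet
  rw [h]
  exact mul_mem (mul_mem (upper_mem _) (lower_mem _)) (upper_mem _)

theorem toSL_surjective : Function.Surjective toSL := by
  intro A
  rw [← MonoidHom.mem_range]
  by_cases hA : A 1 0 = 0
  · have h00 : A 0 0 ≠ 0 := by
      intro h0
      have hdet : A 0 0 * A 1 1 - A 0 1 * A 1 0 = 1 := by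
        rw [← Matrix.det_fin_two]; exact A.det_coe
      rw [h0, hA, zero_mul, mul_zero, sub_zero] at hdet
      exact absurd hdet (by decide)
    -- a row operation makes the lower left entry nonzero
    refine (Subgroup.mul_mem_cancel_left _ (lower_mem 1)).mp (mem_range_of_ne_zero _ ?_)
    rw [Matrix.SpecialLinearGroup.coe_mul]
    simpa [lower, Matrix.mul_apply, Fin.sum_univ_two, hA] using h00
  · exact mem_range_of_ne_zero A hA

/-! ### Abelian quotients -/

/-- A homomorphism from `P` to a commutative group is trivial. -/
theorem map_eq_one_of_comm {A : Type*} [CommGroup A] (f : P →* A) : f = 1 := by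
  have h1 := congrArg f braidPair.braid
  have h2 := congrArg f braidPair.cube
  simp only [map_mul, map_pow] at h1 h2
  have hbx : f bP = f xP := by
    rw [mul_comm (f bP) (f xP)] at h1
    exact mul_left_cancel h1
  have hx : f xP = 1 := by
    rw [hbx] at h2
    have : f xP ^ 3 * f xP = f xP ^ 3 * 1 := by
      rw [mul_one]; rwa [← pow_succ'] at h2
    exact mul_left_cancel this
  refine MonoidHom.eq_of_eqOn_dense closure_bP_xP ?_
  rintro _ (rfl | rfl)
  · exact hbx.trans hx
  · exact hx

/-- `P` is isomorphic to `SL(2, ℤ/5ℤ)`, the binary icosahedral group of order 120;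
in particular its abelianization is trivial. -/
theorem poincare_group :
    Nonempty (P ≃* Matrix.SpecialLinearGroup (Fin 2) (ZMod 5)) ∧
      Subsingleton (Abelianization P) := by
  refine ⟨⟨MulEquiv.ofBijective toSL ⟨toSL_injective, toSL_surjective⟩⟩, ⟨fun a c => ?_⟩⟩
  have h : ∀ a : Abelianization P, a = 1 := by
    intro a
    obtain ⟨g, rfl⟩ := QuotientGroup.mk_surjective a
    exact DFunLike.congr_fun (map_eq_one_of_comm (Abelianization.of : P →* _)) g
  rw [h a, h c]
end

section
/- The group SL(2, ℤ/5ℤ) has exactly 76 subgroups, and the set of its subgroups considered up to conjugacy has exactly 12 elements. -/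
/-!
All subgroups of `G = SL(2, 𝔽₅)` are found by describing the subgroup `H` through the traces of its
elements. An element `x ≠ ±1` has order 4 if `tr x = 0`, order 3 or 6 if `tr x = ∓1`, and order
5 or 10 if `tr x = ±2`; in each case it is conjugate to a standard element, up to sign and powers.

* If `H` has an element of order 5, conjugate it to contain the group `U` of upper unipotent
  matrices. An element of `H` not fixing the line of `U` supplies the opposite unipotent group, and
  the two together generate `G`; otherwise `H` lies in the Borel subgroup and is one of the three
  groups of order 5, 10, 20 between `U` and it (`cl_of_U5`).
* If `H` has no element of order 5 and contains `-1`, then it is `{±1}`, or it contains a cyclic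
  group of order 4 or 6 up to conjugacy. In the first case an element outside that group
  either completes it to a quaternion group `Q₈` or produces an element of order 3, 5, 6 or 10
  (`cl_of_C4`); in the second case `H` is contained in the normalizer of order 12, or contains a
  `Q₈` or an element of order 5 or 10 (`cl_of_C6`). Once `Q₈ ≤ H`, `H` is `Q₈` or its normalizer
  `SL(2, 𝔽₃)` of order 24, as any other element gives one of order 5 or 10 (`cl_of_Q8`).
* If `-1 ∉ H`, then every nontrivial element of `H` has order 3 or 5, and in the absence of order 5
  `H` has order 1 or 3.

So every subgroup is conjugate to one of twelve representatives. Their orders are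
pairwise distinct, so there are 12 classes, and the class of a representative has as many
members as the index of its normalizer, which is again one of the twelve groups. The sum of these
indices is `1 + 1 + 10 + 15 + 6 + 10 + 5 + 6 + 10 + 6 + 5 + 1 = 76`.

The statements about individual matrices used along the way are finite checks over `𝔽₅`.
-/

namespace SL25

open Pointwise

abbrev G := Matrix.SpecialLinearGroup (Fin 2) (ZMod 5)

/-! ### Matrices and traces -/

/-- The matrix with rows `(a, b)` and `(c, d)`, as an element of `SL(2, 𝔽₅)`. -/
def mk (a b c d : ZMod 5) (h : a * d - b * c = 1 := by decide) : G :=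
  ⟨!![a, b; c, d], by rw [Matrix.det_fin_two_of]; exact h⟩

/-- Reduces a quantifier over `SL(2, 𝔽₅)` to one over the four entries, for finite checks. -/
theorem all {P : G → Prop} (h : ∀ a b c d h, P (mk a b c d h)) (g : G) : P g := by
  have := h (g 0 0) (g 0 1) (g 1 0) (g 1 1) (by rw [← Matrix.det_fin_two]; exact g.2)
  convert this
  ext i j; fin_cases i <;> fin_cases j <;> rfl

/-- Equality of matrices is decided entry by entry. -/
instance decidableEq : DecidableEq G := fun g h =>
  decidable_of_iff (g 0 0 = h 0 0 ∧ g 0 1 = h 0 1 ∧ g 1 0 = h 1 0 ∧ g 1 1 = h 1 1)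
    ⟨fun e => by ext i j; fin_cases i <;> fin_cases j <;> simp [e], fun e => by simp [e]⟩

abbrev tr (g : G) : ZMod 5 := g 0 0 + g 1 1

/-- The trace description of the elements of order 5 and 10. -/
abbrev Five (g : G) : Prop := (tr g = 2 ∨ tr g = -2) ∧ g ≠ 1 ∧ g ≠ -1

/-- The companion matrix of `X² + 1`, of order 4. -/
def w : G := mk 0 (-1) 1 0
/-- The companion matrix of `X² + X + 1`, of order 3. -/
def t : G := mk 0 (-1) 1 (-1)
/-- An upper unipotent matrix. -/
def u (k : ZMod 5) : G := mk 1 k 0 1 (by simp)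
/-- A lower unipotent matrix. -/
def v (k : ZMod 5) : G := mk 1 0 k 1 (by simp)

/-! ### The twelve representatives -/

/-- Bounded quantifiers over a list of matrices are decided by running through the list, rather than
through the whole group. -/
instance decidableForall (l : List G) (P : G → Prop) [DecidablePred P] :
    Decidable (∀ x ∈ l, P x) := List.decidableBAll P l

instance decidableExists (l : List G) (P : G → Prop) [DecidablePred P] :
    Decidable (∃ x ∈ l, P x) := List.decidableBEx P l

/-- A subgroup given by the list of its elements. -/
def ofList (l : List G) (h1 : 1 ∈ l) (hm : ∀ x ∈ l, ∀ y ∈ l, x * y ∈ l)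
    (hi : ∀ x ∈ l, x⁻¹ ∈ l) : Subgroup G where
  carrier := {x | x ∈ l}
  one_mem' := h1
  mul_mem' ha hb := hm _ ha _ hb
  inv_mem' ha := hi _ ha

def l2 : List G := [1, -1]
def l3 : List G := [1, t, t ^ 2]
def l4 : List G := [1, -1, w, -w]
def l5 : List G := [u 0, u 1, u 2, u 3, u 4]
def l6 : List G := l3 ++ l3.map (- ·)
def l8 : List G := l4 ++ l4.map (· * mk 2 0 0 3)
def l10 : List G := l5 ++ l5.map (- ·)
def l12 : List G := l6 ++ l6.map (· * mk 0 2 2 0)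
def l20 : List G := l10 ++ l10.map (· * mk 2 0 0 3)
def l24 : List G := l8 ++ l8.map (· * mk 3 3 4 1) ++ l8.map (· * mk 3 3 4 1 ^ 2)

/-- The centre. -/
def C2 : Subgroup G := ofList l2 (by decide +kernel) (by decide +kernel) (by decide +kernel)
/-- A cyclic group of order 3. -/
def C3 : Subgroup G := ofList l3 (by decide +kernel) (by decide +kernel) (by decide +kernel)
/-- A split torus, cyclic of order 4. -/
def C4 : Subgroup G := ofList l4 (by decide +kernel) (by decide +kernel) (by decide +kernel)
/-- The group of upper unipotent matrices. -/
def U5 : Subgroup G := ofList l5 (by decide +kernel) (by decide +kernel) (by decide +kernel)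
/-- A nonsplit torus, cyclic of order 6. -/
def C6 : Subgroup G := ofList l6 (by decide +kernel) (by decide +kernel) (by decide +kernel)
/-- A quaternion group, the normalizer of `C4`. -/
def Q8 : Subgroup G := ofList l8 (by decide +kernel) (by decide +kernel) (by decide +kernel)
/-- The upper unipotent matrices and their negatives. -/
def C10 : Subgroup G := ofList l10 (by decide +kernel) (by decide +kernel) (by decide +kernel)
/-- The dicyclic group of order 12, normalizer of `C6`. -/
def D12 : Subgroup G := ofList l12 (by decide +kernel) (by decide +kernel) (by decide +kernel)
/-- The Borel subgroup of upper triangular matrices. -/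
def B20 : Subgroup G := ofList l20 (by decide +kernel) (by decide +kernel) (by decide +kernel)
/-- The normalizer of `Q8`, a binary tetrahedral group. -/
def T24 : Subgroup G := ofList l24 (by decide +kernel) (by decide +kernel) (by decide +kernel)

/-- The representatives of the conjugacy classes, by increasing order. -/
def R : Fin 12 → Subgroup G := ![⊥, C2, C3, C4, U5, C6, Q8, C10, D12, B20, T24, ⊤]

/-- The normalizer of `R i` is `R (ν i)`. -/
def ν : Fin 12 → Fin 12 := ![11, 11, 8, 6, 9, 8, 10, 9, 8, 9, 10, 11]

/-- The orders of the representatives. -/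
def c : Fin 12 → ℕ := ![1, 2, 3, 4, 5, 6, 8, 10, 12, 20, 24, 120]

theorem card_ofList {l : List G} {h1 hm hi} (hl : l.Nodup) :
    Nat.card (ofList l h1 hm hi) = l.length := by
  rw [← List.toFinset_card_of_nodup hl, ← Nat.card_eq_finsetCard]
  exact Nat.card_congr (Equiv.subtypeEquivRight fun x => List.mem_toFinset.symm)

theorem card_G : Nat.card G = 120 := by
  rw [Nat.card_eq_fintype_card]
  decide +kernel

theorem card_R (i : Fin 12) : Nat.card (R i) = c i := by
  fin_cases i
  · exact Subgroup.card_bot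
  all_goals first
    | exact card_ofList (by decide +kernel)
    | exact Subgroup.card_top.trans card_G

/-! ### Conjugation -/

/-- `H` is conjugate to one of the twelve representatives. -/
def Cl (H : Subgroup G) : Prop := ∃ (i : Fin 12) (g : G), MulAut.conj g • R i = H

theorem cl_R (i : Fin 12) : Cl (R i) := ⟨i, 1, by simp⟩

theorem cl_of_conj {H : Subgroup G} (P : G) (h : Cl (MulAut.conj P⁻¹ • H)) : Cl H := by
  obtain ⟨i, g, h⟩ := h
  exact ⟨i, P * g, by rw [map_mul, mul_smul, h, ← mul_smul, ← map_mul]; simp⟩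

theorem mem_conj {H : Subgroup G} {P x y : G} (h : x ∈ H) (e : x * P = P * y) :
    y ∈ MulAut.conj P⁻¹ • H := by
  have := Subgroup.smul_mem_pointwise_smul x (MulAut.conj P⁻¹) H h
  simpa [mul_assoc, e] using this

/-- If every coset of `K` in `L` contains a power of `g`, then `K` and `g` generate at least
`L`. -/
theorem le_of_powers {K L H : Subgroup G} (hK : K ≤ H) {g : G} (hg : g ∈ H)
    (h : ∀ x ∈ L, ∃ k : Fin 4, x * g ^ (k : ℕ) ∈ K) : L ≤ H := fun x hx => by
  obtain ⟨k, hk⟩ := h x hx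
  exact (H.mul_mem_cancel_right (H.pow_mem hg _)).1 (hK hk)

/-! ### Subgroups with an element of order 5 -/

/-- If `g` does not fix the line of the upper unipotent matrices, then `u i * g` conjugates them to
the lower unipotent matrices for a suitable `i`. -/
theorem opposite : ∀ g : G, g 1 0 ≠ 0 → ∃ i, (u i * g) 0 0 = 0 ∧
    ∀ l, ∃ k, u i * g * u k = v l * (u i * g) :=
  all (by decide +kernel)

theorem bruhat : ∀ g : G, g 1 0 ≠ 0 → ∃ i k, u i * v (g 1 0) * u k = g :=
  all (by decide +kernel)

theorem mul_v : ∀ g : G, g 1 0 = 0 → (g * v 1) 1 0 ≠ 0 := all (by decide +kernel)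

theorem mem_B20 : ∀ g : G, g 1 0 = 0 → g ∈ l20 := all (by decide +kernel)

theorem B20_powers : ∀ g ∈ l20, g ∉ l10 → ∀ x ∈ l20, ∃ k : Fin 4, x * g ^ (k : ℕ) ∈ l10 := by
  decide +kernel

theorem C10_powers : ∀ g ∈ l10, g ∉ l5 → ∀ x ∈ l10, ∃ k : Fin 4, x * g ^ (k : ℕ) ∈ l5 := by
  decide +kernel

theorem C10_powers_sq : ∀ g ∈ l20, g ∉ l10 → ∀ x ∈ l10,
    ∃ k : Fin 4, x * (g ^ 2) ^ (k : ℕ) ∈ l5 := by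
  decide +kernel

theorem u_mem (k : ZMod 5) : u k ∈ U5 := by
  have : ∀ k, u k ∈ l5 := by decide +kernel
  exact this k

theorem cl_of_U5 {H : Subgroup G} (hU : U5 ≤ H) : Cl H := by
  by_cases h : ∃ g ∈ H, g 1 0 ≠ 0
  · obtain ⟨g, hg, hc⟩ := h
    have hu k : u k ∈ H := hU (u_mem k)
    have hv l : v l ∈ H := by
      obtain ⟨i, -, h⟩ := opposite g hc
      obtain ⟨k, h⟩ := h l
      have hig := H.mul_mem (hu i) hg
      exact (H.mul_mem_cancel_right hig).1 (h ▸ H.mul_mem hig (hu k))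
    have big (x : G) (hx : x 1 0 ≠ 0) : x ∈ H := by
      obtain ⟨i, k, h⟩ := bruhat x hx
      rw [← h]
      exact H.mul_mem (H.mul_mem (hu i) (hv _)) (hu k)
    have : H = ⊤ := by
      refine (Subgroup.eq_top_iff' H).2 fun x => ?_
      by_cases hx : x 1 0 = 0
      · exact (H.mul_mem_cancel_right (hv 1)).1 (big _ (mul_v x hx))
      · exact big x hx
    rw [this]
    exact cl_R 11
  push Not at h
  have hB : H ≤ B20 := fun x hx => mem_B20 x (h x hx)
  by_cases h1 : H ≤ C10
  · by_cases h2 : H ≤ U5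
    · rw [le_antisymm h2 hU]
      exact cl_R 4
    obtain ⟨g, hg, hg'⟩ := SetLike.not_le_iff_exists.1 h2
    rw [le_antisymm h1 (le_of_powers hU hg (C10_powers g (h1 hg) hg'))]
    exact cl_R 7
  · obtain ⟨g, hg, hg'⟩ := SetLike.not_le_iff_exists.1 h1
    have h2 : C10 ≤ H := le_of_powers hU (H.pow_mem hg 2) (C10_powers_sq g (hB hg) hg')
    rw [le_antisymm hB (le_of_powers h2 hg (B20_powers g (hB hg) hg'))]
    exact cl_R 9

theorem conj_five : ∀ x : G, Five x → ∃ P ∈ [1, u 0 * w, u 1 * w, u 2 * w, u 3 * w, u 4 * w],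
    ∃ y ∈ l10, x * P = P * y ∧ y ≠ 1 ∧ y ≠ -1 := all (by decide +kernel)

theorem U5_generator : ∀ y ∈ l10, y ≠ 1 → y ≠ -1 → ∃ k : Fin 10, y ^ (k : ℕ) = u 1 := by
  decide +kernel

theorem U5_powers : ∀ x ∈ l5, ∃ k : Fin 5, u 1 ^ (k : ℕ) = x := by decide +kernel

theorem cl_of_five {H : Subgroup G} {x : G} (hx : x ∈ H) (h : Five x) : Cl H := by
  obtain ⟨P, -, y, hy, hP, h1, h2⟩ := conj_five x h
  obtain ⟨k, hk⟩ := U5_generator y hy h1 h2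
  refine cl_of_conj P (cl_of_U5 fun z hz => ?_)
  obtain ⟨j, rfl⟩ := U5_powers z hz
  rw [← hk]
  exact Subgroup.pow_mem _ (Subgroup.pow_mem _ (mem_conj hx hP) _) _

/-! ### Subgroups containing a quaternion group -/

theorem out_Q8 : ∀ g : G, g ∉ l24 → ∃ r ∈ l8, Five (g * r) := all (by decide +kernel)

theorem T24_powers : ∀ g ∈ l24, g ∉ l8 → ∀ x ∈ l24, ∃ k : Fin 4, x * g ^ (k : ℕ) ∈ l8 := by
  decide +kernel

theorem cl_of_Q8 {H : Subgroup G} (hQ : Q8 ≤ H) : Cl H := by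
  by_cases h1 : H ≤ T24
  · by_cases h2 : H ≤ Q8
    · rw [le_antisymm h2 hQ]
      exact cl_R 6
    obtain ⟨g, hg, hg'⟩ := SetLike.not_le_iff_exists.1 h2
    rw [le_antisymm h1 (le_of_powers hQ hg (T24_powers g (h1 hg) hg'))]
    exact cl_R 10
  · obtain ⟨g, hg, hg'⟩ := SetLike.not_le_iff_exists.1 h1
    obtain ⟨r, hr, h⟩ := out_Q8 g hg'
    exact cl_of_five (H.mul_mem hg (hQ hr)) h

theorem C4_powers : ∀ x ∈ l4, ∃ k : Fin 4, w ^ (k : ℕ) = x := by decide +kernel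

theorem Q8_powers : ∀ g ∈ l8, g ∉ l4 → ∀ x ∈ l8, ∃ k : Fin 4, x * g ^ (k : ℕ) ∈ l4 := by
  decide +kernel

theorem C4_le {H : Subgroup G} (h : w ∈ H) : C4 ≤ H := fun x hx => by
  obtain ⟨k, rfl⟩ := C4_powers x hx
  exact H.pow_mem h _

theorem conj_four : ∀ x : G, tr x = 0 → ∃ p q r s h,
    x * mk p q r s h = mk p q r s h * w := all (by decide +kernel)

theorem tr_conj (P x : G) : tr (P⁻¹ * x * P) = tr x := by
  have := Matrix.trace_mul_cycle (P⁻¹).1 x.1 P.1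
  simp only [← Matrix.SpecialLinearGroup.coe_mul, mul_inv_cancel, one_mul] at this
  simpa only [Matrix.trace_fin_two] using this

theorem mem_Q8 : ∀ z : G, tr z = 0 → tr (w * z) = 0 → z ∈ l8 ∧ z ∉ l4 := all (by decide +kernel)

/-- Two anticommuting elements of order 4 generate a conjugate of `Q8`. -/
theorem cl_of_quaternion {H : Subgroup G} {y z : G} (hy : y ∈ H) (hz : z ∈ H) (h1 : tr y = 0)
    (h2 : tr z = 0) (h3 : tr (y * z) = 0) : Cl H := by
  obtain ⟨p, q, r, s, hd, hw⟩ := conj_four y h1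
  set P := mk p q r s hd
  have e : w * (P⁻¹ * z * P) = P⁻¹ * (y * z) * P := by
    rw [← mul_assoc, ← mul_assoc, ← mul_assoc, eq_inv_mul_of_mul_eq hw.symm]
    group
  obtain ⟨h4, h5⟩ := mem_Q8 (P⁻¹ * z * P) ((tr_conj _ _).trans h2)
    (e ▸ (tr_conj _ _).trans h3)
  exact cl_of_conj P (cl_of_Q8 (le_of_powers (C4_le (mem_conj hy hw))
    (mem_conj hz (by group)) (Q8_powers _ h4 h5)))

/-! ### Subgroups containing a cyclic group of order 6 or 4 -/

theorem out_D12 : ∀ g : G, g ∉ l12 → ∃ r ∈ l6, Five (g * r) ∨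
    (tr (g * r) = 0 ∧ tr (t * (g * r) * t⁻¹) = 0 ∧ tr (g * r * (t * (g * r) * t⁻¹)) = 0) :=
  all (by decide +kernel)

theorem D12_powers : ∀ g ∈ l12, g ∉ l6 → ∀ x ∈ l12, ∃ k : Fin 4, x * g ^ (k : ℕ) ∈ l6 := by
  decide +kernel

theorem cl_of_C6 {H : Subgroup G} (hC : C6 ≤ H) : Cl H := by
  by_cases h1 : H ≤ D12
  · by_cases h2 : H ≤ C6
    · rw [le_antisymm h2 hC]
      exact cl_R 5
    obtain ⟨g, hg, hg'⟩ := SetLike.not_le_iff_exists.1 h2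
    rw [le_antisymm h1 (le_of_powers hC hg (D12_powers g (h1 hg) hg'))]
    exact cl_R 8
  · obtain ⟨g, hg, hg'⟩ := SetLike.not_le_iff_exists.1 h1
    obtain ⟨r, hr, h⟩ := out_D12 g hg'
    have hgr := H.mul_mem hg (hC hr)
    have ht : t ∈ H := hC (show t ∈ l6 by decide +kernel)
    obtain h | ⟨h1, h2, h3⟩ := h
    · exact cl_of_five hgr h
    · exact cl_of_quaternion hgr (H.mul_mem (H.mul_mem ht hgr) (H.inv_mem ht)) h1 h2 h3

theorem conj_six : ∀ x : G, tr x ^ 2 = 1 → ∃ p q r s h,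
    x * mk p q r s h = mk p q r s h * t ∨ x * mk p q r s h = mk p q r s h * (-1 * t) :=
  all (by decide +kernel)

theorem C6_powers : ∀ x ∈ l6, ∃ k : Fin 3, t ^ (k : ℕ) = x ∨ -1 * t ^ (k : ℕ) = x := by
  decide +kernel

theorem cl_of_six {H : Subgroup G} {x : G} (hn : -1 ∈ H) (hx : x ∈ H) (h : tr x ^ 2 = 1) :
    Cl H := by
  obtain ⟨p, q, r, s, hd, h⟩ := conj_six x h
  have hn' : -1 ∈ MulAut.conj (mk p q r s hd)⁻¹ • H := mem_conj hn (by simp)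
  have ht : t ∈ MulAut.conj (mk p q r s hd)⁻¹ • H := by
    obtain h | h := h
    · exact mem_conj hx h
    · exact (Subgroup.mul_mem_cancel_left _ hn').1 (mem_conj hx h)
  refine cl_of_conj (mk p q r s hd) (cl_of_C6 fun y hy => ?_)
  obtain ⟨k, rfl | rfl⟩ := C6_powers y hy
  · exact Subgroup.pow_mem _ ht _
  · exact Subgroup.mul_mem _ hn' (Subgroup.pow_mem _ ht _)

theorem out_C4 : ∀ g : G, g ∉ l4 → g ∈ l8 ∨ ∃ r ∈ l4, Five (g * r) ∨ tr (g * r) ^ 2 = 1 :=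
  all (by decide +kernel)

theorem cl_of_C4 {H : Subgroup G} (hC : C4 ≤ H) : Cl H := by
  by_cases h : H ≤ C4
  · rw [le_antisymm h hC]
    exact cl_R 3
  obtain ⟨g, hg, hg'⟩ := SetLike.not_le_iff_exists.1 h
  obtain h | ⟨r, hr, h | h⟩ := out_C4 g hg'
  · exact cl_of_Q8 (le_of_powers hC hg (Q8_powers g h hg'))
  · exact cl_of_five (H.mul_mem hg (hC hr)) h
  · exact cl_of_six (hC (show -1 ∈ l4 by decide +kernel)) (H.mul_mem hg (hC hr)) h

/-! ### Classification -/

theorem conj_three : ∀ x : G, tr x = -1 → ∃ p q r s h,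
    x * mk p q r s h = mk p q r s h * t := all (by decide +kernel)

theorem trichotomy : ∀ x : G, x ∈ l2 ∨ tr x = 0 ∨ tr x ^ 2 = 1 ∨ Five x :=
  all (by decide +kernel)

theorem orders : ∀ x : G, x = 1 ∨ tr x = -1 ∨ Five x ∨ x ^ 2 = -1 ∨ x ^ 3 = -1 :=
  all (by decide +kernel)

/-- The identity `tr (g * r) + tr (g * r⁻¹) = tr g * tr r` prevents `g`, `g * t` and `g * t⁻¹` from
all having trace `-1`. -/
theorem out_C3 : ∀ g : G, g ∉ l3 → ∃ r ∈ l3, tr (g * r) ≠ -1 ∧ g * r ≠ 1 :=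
  all (by decide +kernel)

theorem C3_powers : ∀ x ∈ l3, ∃ k : Fin 3, t ^ (k : ℕ) = x := by decide +kernel

theorem cl_of_C3 {H : Subgroup G} (hC : C3 ≤ H) (hn : -1 ∉ H) : Cl H := by
  by_cases h : H ≤ C3
  · rw [le_antisymm h hC]
    exact cl_R 2
  obtain ⟨g, hg, hg'⟩ := SetLike.not_le_iff_exists.1 h
  obtain ⟨r, hr, h1, h2⟩ := out_C3 g hg'
  have hgr := H.mul_mem hg (hC hr)
  obtain h | h | h | h | h := orders (g * r)
  · exact absurd h h2
  · exact absurd h h1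
  · exact cl_of_five hgr h
  · exact absurd (h ▸ H.pow_mem hgr 2) hn
  · exact absurd (h ▸ H.pow_mem hgr 3) hn

theorem classification (H : Subgroup G) : Cl H := by
  by_cases hn : -1 ∈ H
  · by_cases h : H ≤ C2
    · have : C2 ≤ H := fun x hx => by
        obtain rfl | rfl : x = 1 ∨ x = -1 := by simpa [C2, ofList, l2] using hx
        · exact H.one_mem
        · exact hn
      rw [le_antisymm h this]
      exact cl_R 1
    obtain ⟨g, hg, hg'⟩ := SetLike.not_le_iff_exists.1 h
    obtain h | h | h | h := trichotomy g
    · exact absurd h hg'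
    · obtain ⟨p, q, r, s, hd, h⟩ := conj_four g h
      exact cl_of_conj (mk p q r s hd) (cl_of_C4 (C4_le (mem_conj hg h)))
    · exact cl_of_six hn hg h
    · exact cl_of_five hg h
  · obtain rfl | ⟨g, hg, hg1⟩ := H.bot_or_exists_ne_one
    · exact cl_R 0
    obtain h | h | h | h | h := orders g
    · exact absurd h hg1
    · obtain ⟨p, q, r, s, hd, h⟩ := conj_three g h
      have ht := mem_conj hg h
      refine cl_of_conj (mk p q r s hd) (cl_of_C3 (fun y hy => ?_) fun h => hn ?_)
      · obtain ⟨k, rfl⟩ := C3_powers y hy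
        exact Subgroup.pow_mem _ ht _
      · simpa [Subgroup.mem_pointwise_smul_iff_inv_smul_mem] using h
    · exact cl_of_five hg h
    · exact absurd (h ▸ H.pow_mem hg 2) hn
    · exact absurd (h ▸ H.pow_mem hg 3) hn

/-! ### Counting -/

theorem card_smul (g : G) (H : Subgroup G) : Nat.card ↥(MulAut.conj g • H) = Nat.card H :=
  Nat.card_congr (Subgroup.equivSMul (MulAut.conj g) H).symm.toEquiv

theorem R_unique {i j : Fin 12} {g h : G} (e : MulAut.conj g • R i = MulAut.conj h • R j) :
    i = j := by
  have := congrArg (fun H : Subgroup G => Nat.card H) e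
  simp only [card_smul, card_R] at this
  exact (by decide : Function.Injective c) this

/-- The stabilizer of `H` under conjugation is `K`, as soon as `K` normalizes `H` and every element
conjugating the elements of some `s ⊆ H` into `H` lies in `K`. -/
theorem smul_eq_of_forall {H K : Subgroup G} (s : List G) (hs : ∀ x ∈ s, x ∈ H)
    (h1 : ∀ g : G, (∀ x ∈ s, ∃ y ∈ H, g * x = y * g) → g ∈ K)
    (h2 : ∀ g ∈ K, ∀ x ∈ H, ∃ y ∈ H, g * x = y * g) (g : G) :
    MulAut.conj g • H = H ↔ g ∈ K := by
  constructor
  · intro h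
    refine h1 g fun x hx => ⟨g * x * g⁻¹, ?_, by simp⟩
    have := Subgroup.smul_mem_pointwise_smul x (MulAut.conj g) H (hs x hx)
    rw [h] at this
    simpa using this
  · intro hg
    refine Subgroup.eq_of_le_of_card_ge ?_ (card_smul g H).ge
    intro z hz
    obtain ⟨x, hx, rfl⟩ := (Subgroup.mem_smul_pointwise_iff_exists _ _ _).1 hz
    obtain ⟨y, hy, e⟩ := h2 g hg x hx
    simpa [e] using hy

theorem self_normalizes (H : Subgroup G) : ∀ g ∈ H, ∀ x ∈ H, ∃ y ∈ H, g * x = y * g :=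
  fun g hg x hx => ⟨g * x * g⁻¹, H.mul_mem (H.mul_mem hg hx) (H.inv_mem hg), by simp⟩

theorem out_normalizer_C3 : ∀ g : G, (∀ x ∈ [t], ∃ y ∈ l3, g * x = y * g) → g ∈ l12 :=
  all (by decide +kernel)

theorem normalizer_C3 : ∀ g ∈ l12, ∀ x ∈ l3, ∃ y ∈ l3, g * x = y * g := by
  decide +kernel

theorem out_normalizer_C4 : ∀ g : G, (∀ x ∈ [w], ∃ y ∈ l4, g * x = y * g) → g ∈ l8 :=
  all (by decide +kernel)

theorem normalizer_C4 : ∀ g ∈ l8, ∀ x ∈ l4, ∃ y ∈ l4, g * x = y * g := by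
  decide +kernel

theorem out_normalizer_U5 : ∀ g : G, (∀ x ∈ [u 1], ∃ y ∈ l5, g * x = y * g) → g ∈ l20 :=
  all (by decide +kernel)

theorem normalizer_U5 : ∀ g ∈ l20, ∀ x ∈ l5, ∃ y ∈ l5, g * x = y * g := by
  decide +kernel

theorem out_normalizer_C6 : ∀ g : G, (∀ x ∈ [t], ∃ y ∈ l6, g * x = y * g) → g ∈ l12 :=
  all (by decide +kernel)

theorem normalizer_C6 : ∀ g ∈ l12, ∀ x ∈ l6, ∃ y ∈ l6, g * x = y * g := by
  decide +kernel

theorem out_normalizer_Q8 : ∀ g : G, (∀ x ∈ [w, mk 2 0 0 3], ∃ y ∈ l8, g * x = y * g) → g ∈ l24 :=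
  all (by decide +kernel)

theorem normalizer_Q8 : ∀ g ∈ l24, ∀ x ∈ l8, ∃ y ∈ l8, g * x = y * g := by
  decide +kernel

theorem out_normalizer_C10 : ∀ g : G, (∀ x ∈ [u 1], ∃ y ∈ l10, g * x = y * g) → g ∈ l20 :=
  all (by decide +kernel)

theorem normalizer_C10 : ∀ g ∈ l20, ∀ x ∈ l10, ∃ y ∈ l10, g * x = y * g := by
  decide +kernel

theorem out_normalizer_D12 : ∀ g : G, (∀ x ∈ [t], ∃ y ∈ l12, g * x = y * g) → g ∈ l12 :=
  all (by decide +kernel)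

theorem out_normalizer_B20 : ∀ g : G, (∀ x ∈ [u 1], ∃ y ∈ l20, g * x = y * g) → g ∈ l20 :=
  all (by decide +kernel)

theorem out_normalizer_T24 : ∀ g : G, (∀ x ∈ [w, mk 2 0 0 3], ∃ y ∈ l24, g * x = y * g) → g ∈ l24 :=
  all (by decide +kernel)

theorem smul_R_eq (i : Fin 12) (g : G) : MulAut.conj g • R i = R i ↔ g ∈ R (ν i) := by
  fin_cases i
  · exact iff_of_true (Subgroup.smul_bot _) (Subgroup.mem_top g)
  · refine smul_eq_of_forall (H := C2) (K := ⊤) [] (by simp) (fun _ _ => Subgroup.mem_top _) ?_ g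
    intro g _ x hx
    refine ⟨x, hx, ?_⟩
    obtain rfl | rfl : x = 1 ∨ x = -1 := by simpa [C2, ofList, l2] using hx
    all_goals simp
  · exact smul_eq_of_forall (H := C3) (K := D12) [t]
      (show ∀ x ∈ [t], x ∈ l3 by decide +kernel) out_normalizer_C3 normalizer_C3 g
  · exact smul_eq_of_forall (H := C4) (K := Q8) [w]
      (show ∀ x ∈ [w], x ∈ l4 by decide +kernel) out_normalizer_C4 normalizer_C4 g
  · exact smul_eq_of_forall (H := U5) (K := B20) [u 1]
      (show ∀ x ∈ [u 1], x ∈ l5 by decide +kernel) out_normalizer_U5 normalizer_U5 g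
  · exact smul_eq_of_forall (H := C6) (K := D12) [t]
      (show ∀ x ∈ [t], x ∈ l6 by decide +kernel) out_normalizer_C6 normalizer_C6 g
  · exact smul_eq_of_forall (H := Q8) (K := T24) [w, mk 2 0 0 3]
      (show ∀ x ∈ [w, mk 2 0 0 3], x ∈ l8 by decide +kernel) out_normalizer_Q8 normalizer_Q8 g
  · exact smul_eq_of_forall (H := C10) (K := B20) [u 1]
      (show ∀ x ∈ [u 1], x ∈ l10 by decide +kernel) out_normalizer_C10 normalizer_C10 g
  · exact smul_eq_of_forall (H := D12) (K := D12) [t]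
      (show ∀ x ∈ [t], x ∈ l12 by decide +kernel) out_normalizer_D12 (self_normalizes _) g
  · exact smul_eq_of_forall (H := B20) (K := B20) [u 1]
      (show ∀ x ∈ [u 1], x ∈ l20 by decide +kernel) out_normalizer_B20 (self_normalizes _) g
  · exact smul_eq_of_forall (H := T24) (K := T24) [w, mk 2 0 0 3]
      (show ∀ x ∈ [w, mk 2 0 0 3], x ∈ l24 by decide +kernel) out_normalizer_T24 (self_normalizes _) g
  · refine smul_eq_of_forall (H := ⊤) (K := ⊤) [] (by simp) (fun _ _ => Subgroup.mem_top _)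
      (self_normalizes _) g

/-- The sizes of the conjugacy classes of the representatives, the indices of their
normalizers. -/
def n : Fin 12 → ℕ := ![1, 1, 10, 15, 6, 10, 5, 6, 10, 6, 5, 1]

theorem index_R (i : Fin 12) : (R (ν i)).index = n i := by
  refine Nat.eq_of_mul_eq_mul_left (Nat.card_pos (α := R (ν i))) ?_
  rw [Subgroup.card_mul_index, card_G, card_R]
  exact (by decide : ∀ i, 120 = c (ν i) * n i) i

/-- The quotient by the normalizers parametrizes all subgroups. -/
theorem bijective_conj : Function.Bijective
    (fun p : (i : Fin 12) × (G ⧸ R (ν i)) => Quotient.liftOn' p.2 (fun g => MulAut.conj g • R p.1)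
      fun g h e => by
        have := (smul_R_eq p.1 (g⁻¹ * h)).2 (QuotientGroup.leftRel_apply.1 e)
        rw [map_mul, mul_smul, map_inv, inv_smul_eq_iff] at this
        exact this.symm) := by
  constructor
  · rintro ⟨i, x⟩ ⟨j, y⟩ e
    induction x using QuotientGroup.induction_on with | H g => ?_
    induction y using QuotientGroup.induction_on with | H h => ?_
    change MulAut.conj g • R i = MulAut.conj h • R j at e
    obtain rfl := R_unique e
    congr 1
    refine QuotientGroup.eq.2 ((smul_R_eq i _).1 ?_)
    rw [map_mul, mul_smul, ← e, ← mul_smul, ← map_mul]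
    simp
  · intro H
    obtain ⟨i, g, h⟩ := classification H
    exact ⟨⟨i, (g : G ⧸ R (ν i))⟩, h⟩

theorem card_subgroups : Nat.card (Subgroup G) = 76 := by
  rw [← Nat.card_congr (Equiv.ofBijective _ bijective_conj), Nat.card_sigma]
  exact (Finset.sum_congr rfl fun i _ => index_R i).trans (by decide)

theorem card_classes : Nat.card (Quot fun K₁ K₂ : Subgroup G =>
    ∃ g : G, Subgroup.map (MulAut.conj g).toMonoidHom K₁ = K₂) = 12 := by
  have hb : Function.Bijective fun i => Quot.mk (fun K₁ K₂ : Subgroup G =>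
      ∃ g : G, Subgroup.map (MulAut.conj g).toMonoidHom K₁ = K₂) (R i) := by
    constructor
    · intro i j e
      -- The order of a subgroup is well defined on classes and separates the representatives.
      have := congrArg (Quot.lift (fun K : Subgroup G => Nat.card K) (by
        rintro K _ ⟨g, rfl⟩
        exact (card_smul g K).symm)) e
      change Nat.card (R i) = Nat.card (R j) at this
      rw [card_R, card_R] at this
      exact (by decide : Function.Injective c) this
    · rintro ⟨H⟩
      obtain ⟨i, g, h⟩ := classification H
      exact ⟨i, Quot.sound ⟨g, h⟩⟩
  rw [← Nat.card_congr (Equiv.ofBijective _ hb), Nat.card_fin]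

end SL25

/-- `SL(2, ℤ/5ℤ)` has exactly 76 subgroups, falling into exactly 12 conjugacy classes. -/
theorem sl25_subgroups :
    Nat.card (Subgroup (Matrix.SpecialLinearGroup (Fin 2) (ZMod 5))) = 76 ∧
      Nat.card (Quot (fun K₁ K₂ : Subgroup (Matrix.SpecialLinearGroup (Fin 2) (ZMod 5)) =>
        ∃ g : Matrix.SpecialLinearGroup (Fin 2) (ZMod 5),
          Subgroup.map (MulAut.conj g).toMonoidHom K₁ = K₂)) = 12 :=
  ⟨SL25.card_subgroups, SL25.card_classes⟩
end

section
/- Every subgroup of SL(2, ℤ/5ℤ) of index 5 is isomorphic to SL(2, ℤ/3ℤ). (These index-5 subgroups correspond to the degree-5 covers of the Poincaré homology sphere, which are tetrahedral spherical space forms.) -/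
/-!
Let `K ≤ SL(2, 𝔽₅)` have index 5, hence order 24. The proof builds an explicit isomorphism
`SL(2, 𝔽₃) ≃* K` by passing through the units of the Hurwitz quaternions.

*The group of Hurwitz units.* The 24 units `±1, ±i, ±j, ±k, (±1 ± i ± j ± k)/2` of the Hurwitz order
form a group. Reduction mod 3 identifies it with the norm one group of `ℍ[𝔽₃] ≅ M₂(𝔽₃)`, that is
with `SL(2, 𝔽₃)`, and reduction mod 5 embeds it in `ℍ[𝔽₅]`. This gives an explicit multiplicative
map `hurwitz : SL(2, 𝔽₃) →* ℍ[𝔽₅]`.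

*A good pair in `K`.* If `A, B ∈ SL(2, 𝔽₅)` satisfy `tr A = tr B = -1` and `tr (AB) = 0`, then
`i = AB`, `j = BA`, `k = A - B` satisfy the quaternion relations, so they define an algebra
map `ℍ[𝔽₅] → M₂(𝔽₅)`; composing it with `hurwitz` gives a homomorphism on `SL(2, 𝔽₃)` which sends
the two elementary generators to `A` and `B`. It is injective because the trace recovers the real
part, and its image lies in `K` as soon as `A, B ∈ K`. Both groups have order 24, so it is then an
isomorphism onto `K`.

*Existence of the pair.* `K` has an element `c` of order 3, of trace `-1`, and no element of order
5. For `x ∈ K` put `c' = x c x⁻¹` and `t = tr (c c')`, so that `tr (c c'⁻¹) = 1 - t`. If `t = 0` or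
`t = 1`, then `(c, c')` or `(c, c'⁻¹)` is a good pair. For the other three values of `t`, one of
`c c'`, `c c'⁻¹`, `(c c')²` has trace 2, hence is trivial since `K` has no nontrivial unipotents,
and `c' = c` or `c' = c⁻¹` follows. If this happened for every `x ∈ K`, then `K` would normalize
`⟨c⟩`; but the centralizer of `c` consists of the `p + q c` with `p² - p q + q² = 1`, so it has
order at most 6, and `K` would have order at most 12.
-/

open Matrix

namespace SL25

/-- `SL(2, 𝔽₃)`. -/
abbrev G3 := SpecialLinearGroup (Fin 2) (ZMod 3)

/-- `SL(2, 𝔽₅)`. -/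
abbrev G5 := SpecialLinearGroup (Fin 2) (ZMod 5)

/-- `2 × 2` matrices over `𝔽₅`. -/
abbrev M5 := Matrix (Fin 2) (Fin 2) (ZMod 5)

lemma card_G3 : Fintype.card G3 = 24 := by decide +kernel

lemma card_G5 : Fintype.card G5 = 120 := by decide +kernel

/-- The Hamilton quaternions over `𝔽₅`, written as a `QuaternionAlgebra` so that the universal
property `QuaternionAlgebra.Basis.liftHom` applies. -/
abbrev H5 := QuaternionAlgebra (ZMod 5) (-1) 0 (-1)

instance : Fact (Nat.Prime 5) := ⟨Nat.prime_five⟩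

/-! ### Hurwitz units -/

/-- Reduction mod 5 of the representative in `{-1, 0, 1}` of a class mod 3. -/
def lift35 (x : ZMod 3) : ZMod 5 := if x = 0 then 0 else if x = 1 then 1 else -1

/-- The reduction mod 5 of the Hurwitz unit whose reduction mod 3 is the given matrix.

Here `ℍ[𝔽₃]` is identified with `M₂(𝔽₃)` by `i = UV`, `j = VU`, where `U = !![1, 1; 0, 1]` and
`V = !![1, 0; 1, 1]`, and `x0, x1, x2, x3` are the coordinates of the matrix in the basis
`1, i, j, k`. A vector of norm 1 over `𝔽₃` has either one or four nonzero coordinates. In the first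
case the unit is the lift with coordinates in `{-1, 0, 1}`; in the second it is `-1/2` times that
lift, because `-1/2 = 1` in `𝔽₃`, and `-1/2 = 2` in `𝔽₅`. -/
def hurwitzFun (M : G3) : H5 :=
  let x0 := -(M 0 0 + M 1 1)
  let x1 := M 0 1 + M 1 0 + M 1 1 - M 0 0
  let x2 := M 0 0 + M 0 1 + M 1 0 - M 1 1
  let x3 := M 1 0 - M 0 1
  let l : ZMod 5 := if x0 * x1 * x2 * x3 = 0 then 1 else 2
  ⟨l * lift35 x0, l * lift35 x1, l * lift35 x2, l * lift35 x3⟩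

instance : DecidableEq (H5) :=
  fun _ _ => decidable_of_iff _ QuaternionAlgebra.ext_iff.symm

/-- `hurwitzFun` as a monoid homomorphism. -/
def hurwitz : G3 →* H5 where
  toFun := hurwitzFun
  map_one' := by decide +kernel
  map_mul' := by decide +kernel

lemma eq_one_of_hurwitz_re : ∀ M : G3, (hurwitz M).re = 1 → M = 1 := by decide +kernel

/-- The upper elementary generator of `SL(2, 𝔽₃)`. -/
def U : G3 := ⟨!![1, 1; 0, 1], by decide⟩

/-- The lower elementary generator of `SL(2, 𝔽₃)`. -/
def V : G3 := ⟨!![1, 0; 1, 1], by decide⟩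

lemma exists_word : ∀ M : G3, ∃ a b c d : Fin 3,
    M = U ^ (a : ℕ) * V ^ (b : ℕ) * U ^ (c : ℕ) * V ^ (d : ℕ) := by decide +kernel

lemma hurwitz_U : hurwitz U = (⟨2, 2, 2, -2⟩ : H5) := by decide +kernel

lemma hurwitz_V : hurwitz V = (⟨2, 2, 2, 2⟩ : H5) := by decide +kernel

/-! ### Trace identities -/

lemma coe_mul (A B : G5) : ((A * B : G5) : M5) = (A : M5) * (B : M5) := rfl

/-- Cayley–Hamilton in `SL(2, 𝔽₅)`. -/
lemma sq_eq (A : G5) : (A : M5) * A = (A : M5).trace • (A : M5) - 1 := by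
  have h := A.det_coe
  rw [det_fin_two] at h
  ext i j
  fin_cases i <;> fin_cases j <;> simp [mul_apply, Fin.sum_univ_two, trace_fin_two] <;>
    first | ring1 | linear_combination -h

/-- The polarized Cayley–Hamilton identity. -/
lemma mul_add_mul (A B : M5) : A * B + B * A =
    A.trace • B + B.trace • A + ((A * B).trace - A.trace * B.trace) • (1 : M5) := by
  ext i j
  fin_cases i <;> fin_cases j <;> simp [mul_apply, Fin.sum_univ_two, trace_fin_two] <;> ring

lemma trace_mul_inv (A B : G5) : ((A * B⁻¹ : G5) : M5).trace =
    (A : M5).trace * (B : M5).trace - ((A * B : G5) : M5).trace := by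
  simp [adjugate_fin_two, trace_fin_two, mul_apply, Fin.sum_univ_two]
  ring

lemma trace_inv (A : G5) : ((A⁻¹ : G5) : M5).trace = (A : M5).trace := by
  simp [adjugate_fin_two, trace_fin_two, add_comm]

lemma trace_conj (x c : G5) : ((x * c * x⁻¹ : G5) : M5).trace = (c : M5).trace := by
  rw [coe_mul, trace_mul_comm, ← coe_mul]
  simp

lemma trace_of_cube : ∀ c : G5, c ^ 3 = 1 → c ≠ 1 → (c : M5).trace = -1 := by decide +kernel

lemma pow_five_of_trace : ∀ c : G5, (c : M5).trace = 2 → c ^ 5 = 1 := by decide +kernel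

/-! ### The isomorphism attached to a good pair -/

lemma mul_add_mul_good {A B : G5} (hA : (A : M5).trace = -1) (hB : (B : M5).trace = -1)
    (hAB : ((A * B : G5) : M5).trace = 0) : (A : M5) * B + B * A = -A - B - 1 := by
  have h := mul_add_mul (A : M5) B
  rw [← coe_mul, hA, hB, hAB] at h
  rw [← coe_mul, h]
  norm_num
  abel

/-- The quaternion basis `i = AB`, `j = BA`, `k = A - B` of `M₂(𝔽₅)`. The relations follow
from `A² = -A - 1`, `B² = -B - 1` and `AB + BA = -A - B - 1`, the latter giving `ABA = B + 1` and
`BAB = A + 1`. -/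
def goodBasis {A B : G5} (hA : (A : M5).trace = -1) (hB : (B : M5).trace = -1)
    (hAB : ((A * B : G5) : M5).trace = 0) : QuaternionAlgebra.Basis M5 (-1 : ZMod 5) 0 (-1) :=
  have hA2 : (A : M5) * A = -A - 1 := by rw [sq_eq, hA, neg_one_smul]
  have hB2 : (B : M5) * B = -B - 1 := by rw [sq_eq, hB, neg_one_smul]
  have hS : (B : M5) * A = -(A * B) - A - B - 1 := by
    rw [eq_sub_of_add_eq' (mul_add_mul_good hA hB hAB)]
    abel
  have hABA : (A : M5) * (B * A) = B + 1 := by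
    rw [hS]
    simp only [mul_sub, mul_neg, ← mul_assoc, hA2, sub_mul, neg_mul, one_mul, mul_one]
    abel
  have hBAB : (B : M5) * (A * B) = A + 1 := by
    rw [← mul_assoc, hS]
    simp only [sub_mul, neg_mul, mul_assoc, hB2, mul_sub, mul_neg, one_mul, mul_one]
    abel
  { i := A * B
    j := B * A
    k := A - B
    i_mul_i := by
      rw [mul_assoc, hBAB, mul_add, hA2, mul_one, neg_one_smul, zero_smul]
      abel
    j_mul_j := by
      rw [mul_assoc, hABA, mul_add, hB2, mul_one, neg_one_smul]
      abel
    i_mul_j := by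
      rw [mul_assoc, ← mul_assoc (B : M5) B A, hB2, sub_mul, neg_mul, mul_sub, mul_neg, hABA,
        one_mul, hA2]
      abel
    j_mul_i := by
      rw [mul_assoc, ← mul_assoc (A : M5) A B, hA2, sub_mul, neg_mul, mul_sub, mul_neg, hBAB,
        one_mul, hB2, zero_smul]
      abel }

/-- The homomorphism `SL(2, 𝔽₃) → M₂(𝔽₅)` attached to a good pair. -/
def goodHom {A B : G5} (hA : (A : M5).trace = -1) (hB : (B : M5).trace = -1)
    (hAB : ((A * B : G5) : M5).trace = 0) : G3 →* M5 :=
  ((goodBasis hA hB hAB).liftHom : H5 →* M5).comp hurwitz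

lemma goodHom_apply {A B : G5} (hA : (A : M5).trace = -1) (hB : (B : M5).trace = -1)
    (hAB : ((A * B : G5) : M5).trace = 0) (M : G3) : goodHom hA hB hAB M =
    (hurwitz M).re • (1 : M5) + (hurwitz M).imI • ((A : M5) * B) +
      (hurwitz M).imJ • ((B : M5) * A) + (hurwitz M).imK • ((A : M5) - B) := by
  rw [← Algebra.algebraMap_eq_smul_one]
  rfl

/-- `hurwitz U` is `(-1 - i - j + k)/2`, and `-1 - i - j + k = 2 • A`. -/
lemma goodHom_U {A B : G5} (hA : (A : M5).trace = -1) (hB : (B : M5).trace = -1)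
    (hAB : ((A * B : G5) : M5).trace = 0) : goodHom hA hB hAB U = A := by
  have h := mul_add_mul_good hA hB hAB
  rw [goodHom_apply, hurwitz_U]
  have : (2 : ZMod 5) • (1 : M5) + (2 : ZMod 5) • ((A : M5) * B) +
      (2 : ZMod 5) • ((B : M5) * A) + (-2 : ZMod 5) • ((A : M5) - B) =
      (2 : ZMod 5) • (1 + ((A : M5) * B + B * A) - A + B) := by module
  rw [this, h]
  have h4 : (-4 : ZMod 5) = 1 := by decide
  calc _ = (-4 : ZMod 5) • (A : M5) := by module
    _ = _ := by rw [h4, one_smul]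

/-- `hurwitz V` is `(-1 - i - j - k)/2`, and `-1 - i - j - k = 2 • B`. -/
lemma goodHom_V {A B : G5} (hA : (A : M5).trace = -1) (hB : (B : M5).trace = -1)
    (hAB : ((A * B : G5) : M5).trace = 0) : goodHom hA hB hAB V = B := by
  have h := mul_add_mul_good hA hB hAB
  rw [goodHom_apply, hurwitz_V]
  have : (2 : ZMod 5) • (1 : M5) + (2 : ZMod 5) • ((A : M5) * B) +
      (2 : ZMod 5) • ((B : M5) * A) + (2 : ZMod 5) • ((A : M5) - B) =
      (2 : ZMod 5) • (1 + ((A : M5) * B + B * A) + A - B) := by module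
  rw [this, h]
  have h4 : (-4 : ZMod 5) = 1 := by decide
  calc _ = (-4 : ZMod 5) • (B : M5) := by module
    _ = _ := by rw [h4, one_smul]

lemma goodHom_injective {A B : G5} (hA : (A : M5).trace = -1) (hB : (B : M5).trace = -1)
    (hAB : ((A * B : G5) : M5).trace = 0) : Function.Injective (goodHom hA hB hAB) := by
  rw [injective_iff_map_eq_one]
  intro M hM
  -- `i`, `j`, `k` have trace zero, so the trace of the image is twice the real part.
  have ht := congrArg trace hM
  have hBA : ((B : M5) * A).trace = 0 := by
    rw [trace_mul_comm, ← coe_mul, hAB]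
  have hAB' : ((A : M5) * B).trace = 0 := hAB
  rw [goodHom_apply] at ht
  simp only [trace_add, trace_sub, trace_smul, hAB', hBA, hA, hB, trace_one, Fintype.card_fin,
    smul_eq_mul, sub_self, mul_zero, add_zero] at ht
  apply eq_one_of_hurwitz_re
  revert ht
  generalize (hurwitz M).re = r
  revert r
  decide

/-- The homomorphism attached to a good pair in a subgroup of order 24 takes values in it,
since `U` and `V` generate `SL(2, 𝔽₃)`, and is bijective onto it by counting. -/
lemma nonempty_mulEquiv {A B : G5} (hA : (A : M5).trace = -1) (hB : (B : M5).trace = -1)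
    (hAB : ((A * B : G5) : M5).trace = 0) (K : Subgroup G5) (hK : Nat.card K = 24)
    (hAK : A ∈ K) (hBK : B ∈ K) :
    Nonempty (K ≃* G3) := by
  let ι : K →* M5 := SpecialLinearGroup.coeMonoidHom.comp K.subtype
  have hι : Function.Injective ι := fun x y h => Subtype.ext (Subtype.ext h)
  have hmem (M : G3) : ∃ x : K, ι x = goodHom hA hB hAB M := by
    obtain ⟨a, b, c, d, rfl⟩ := exists_word M
    refine ⟨⟨A, hAK⟩ ^ (a : ℕ) * ⟨B, hBK⟩ ^ (b : ℕ) * ⟨A, hAK⟩ ^ (c : ℕ) * ⟨B, hBK⟩ ^ (d : ℕ), ?_⟩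
    simp only [map_mul, map_pow, goodHom_U, goodHom_V]
    rfl
  choose f hf using hmem
  let F : G3 →* K :=
    { toFun := f
      map_one' := hι (by rw [hf, map_one, map_one])
      map_mul' := fun M N => hι (by rw [hf, map_mul, map_mul, hf, hf]) }
  have hF : Function.Injective F := fun M N h =>
    goodHom_injective hA hB hAB (by rw [← hf, ← hf]; exact congrArg ι h)
  have : Finite K := Nat.finite_of_card_ne_zero (by rw [hK]; decide)
  have hbij : Function.Bijective F := (Nat.bijective_iff_injective_and_card F).2
    ⟨hF, by rw [hK, Nat.card_eq_fintype_card, card_G3]⟩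
  exact ⟨(MulEquiv.ofBijective F hbij).symm⟩

/-! ### Existence of a good pair -/

lemma trace_sq : ∀ g : G5, (g : M5).trace = -2 → ((g ^ 2 : G5) : M5).trace = 2 := by
  decide +kernel

lemma eq_neg_one_of_sq : ∀ g : G5, g ^ 2 = 1 → (g : M5).trace = -2 → g = -1 := by
  decide +kernel

/-- A group of order prime to 5 has no nontrivial unipotent elements. -/
lemma eq_one_of_trace (K : Subgroup G5) (hK : Nat.card K = 24) {g : G5} (hg : g ∈ K)
    (ht : (g : M5).trace = 2) : g = 1 := by
  have h5 := orderOf_dvd_of_pow_eq_one (pow_five_of_trace g ht)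
  have h24 : orderOf g ∣ 24 := hK ▸ K.orderOf_dvd_natCard hg
  have : orderOf g ∣ Nat.gcd 5 24 := Nat.dvd_gcd h5 h24
  exact orderOf_eq_one_iff.1 (Nat.dvd_one.1 this)

/-- If neither `(c, c')` nor `(c, c'⁻¹)` is a good pair, then `c' = c` or `c' = c⁻¹`. -/
lemma good_or_eq (K : Subgroup G5) (hK : Nat.card K = 24) {c c' : G5} (hcK : c ∈ K) (hcK' : c' ∈ K)
    (hc : (c : M5).trace = -1) (hc' : (c' : M5).trace = -1)
    (h0 : ((c * c' : G5) : M5).trace ≠ 0) (h1 : ((c * c'⁻¹ : G5) : M5).trace ≠ 0) :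
    c' = c ∨ c' = c⁻¹ := by
  have hi := trace_mul_inv c c'
  rw [hc, hc'] at hi
  have hcases : ∀ t : ZMod 5, t ≠ 0 → -1 * -1 - t ≠ 0 → t = 2 ∨ t = -2 ∨ -1 * -1 - t = 2 := by
    decide
  rw [hi] at h1
  rcases hcases _ h0 h1 with h | h | h
  · right
    exact eq_inv_of_mul_eq_one_right (eq_one_of_trace K hK (mul_mem hcK hcK') h)
  · exfalso
    have h2 := eq_one_of_trace K hK (pow_mem (mul_mem hcK hcK') 2) (trace_sq _ h)
    have h3 := eq_neg_one_of_sq _ h2 h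
    have h4 : c' = -c⁻¹ := by
      rw [← inv_mul_cancel_left c c', h3, mul_neg, mul_one]
    have h5 := trace_inv c
    rw [h4, SpecialLinearGroup.coe_neg, trace_neg, h5, hc] at hc'
    exact absurd hc' (by decide)
  · left
    rw [← hi] at h
    exact (mul_inv_eq_one.1 (eq_one_of_trace K hK (mul_mem hcK (inv_mem hcK')) h)).symm

/-- The matrices `p + q c` of determinant 1, when `c` has trace `-1` and determinant 1. -/
def centSet (c : M5) : Finset M5 :=
  (Finset.univ.filter fun z : ZMod 5 × ZMod 5 => z.1 ^ 2 - z.1 * z.2 + z.2 ^ 2 = 1).image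
    fun z => z.1 • (1 : M5) + z.2 • c

lemma mem_centSet {x c : G5} (hc : (c : M5).trace = -1) (h : x * c = c * x) :
    (x : M5) ∈ centSet c := by
  have hdx := x.det_coe
  have hdc := c.det_coe
  have e := congrArg (fun g : G5 => (g : M5)) h
  simp only [coe_mul] at e
  have e00 := congrFun (congrFun e 0) 0
  have e01 := congrFun (congrFun e 0) 1
  simp only [mul_apply, Fin.sum_univ_two] at e00 e01
  rw [trace_fin_two] at hc
  rw [det_fin_two] at hdx hdc
  -- The polynomial `X² + X + 1` is irreducible over `𝔽₅`, so `c` is not triangular.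
  have hb : (c : M5) 0 1 ≠ 0 := by
    intro hb
    have hd : (c : M5) 1 1 = -1 - (c : M5) 0 0 := by linear_combination hc
    rw [hb, hd] at hdc
    generalize (c : M5) 0 0 = a at hdc
    generalize (c : M5) 1 0 = b at hdc
    revert a b
    decide
  obtain ⟨q, hq⟩ : ∃ q, (x : M5) 0 1 = q * (c : M5) 0 1 :=
    ⟨(x : M5) 0 1 / (c : M5) 0 1, by field_simp⟩
  obtain ⟨p, hp⟩ : ∃ p, (x : M5) 0 0 = p + q * (c : M5) 0 0 :=
    ⟨(x : M5) 0 0 - q * (c : M5) 0 0, by ring⟩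
  have hx10 : (x : M5) 1 0 = q * (c : M5) 1 0 := by
    apply mul_left_cancel₀ hb
    rw [hq] at e00
    linear_combination -e00
  have hx11 : (x : M5) 1 1 = p + q * (c : M5) 1 1 := by
    apply mul_left_cancel₀ hb
    rw [hq, hp] at e01
    linear_combination -e01
  rw [centSet, Finset.mem_image]
  refine ⟨(p, q), ?_, ?_⟩
  · rw [hq, hp, hx10, hx11] at hdx
    simp only [Finset.mem_filter, Finset.mem_univ, true_and]
    linear_combination hdx - p * q * hc - q ^ 2 * hdc
  · ext i j
    fin_cases i <;> fin_cases j <;> simp [hq, hp, hx10, hx11]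

/-- The centralizer of an element of trace `-1` has order at most 6. -/
lemma card_centralizer_le {c : G5} (hc : (c : M5).trace = -1) :
    (Finset.univ.filter fun x : G5 => x * c = c * x).card ≤ 6 := by
  calc _ ≤ (centSet c).card := Finset.card_le_card_of_injOn (fun x : G5 => (x : M5))
          (fun x hx => mem_centSet hc (by simpa using hx)) (fun x _ y _ h => Subtype.ext h)
    _ ≤ _ := Finset.card_image_le
    _ = 6 := by decide

/-- A group of order 24 does not normalize the subgroup generated by an element of trace `-1`. -/
lemma exists_conj_ne (K : Subgroup G5) (hK : Nat.card K = 24) {c : G5}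
    (hc : (c : M5).trace = -1) : ∃ x ∈ K, x * c * x⁻¹ ≠ c ∧ x * c * x⁻¹ ≠ c⁻¹ := by
  by_contra! hcon
  set Z := Finset.univ.filter fun x : G5 => x * c = c * x with hZ
  -- `y` represents the nontrivial coset of the centralizer, if there is one.
  obtain ⟨y, hy⟩ : ∃ y : G5, ∀ x ∈ K, x ∈ Z ∨ y⁻¹ * x ∈ Z := by
    by_cases hall : ∀ x ∈ K, x * c * x⁻¹ = c
    · exact ⟨1, fun x hx => Or.inl (by simpa [hZ] using mul_inv_eq_iff_eq_mul.1 (hall x hx))⟩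
    · push Not at hall
      obtain ⟨y, hyK, hyc⟩ := hall
      refine ⟨y, fun x hx => ?_⟩
      by_cases hxc : x * c * x⁻¹ = c
      · exact Or.inl (by simpa [hZ] using mul_inv_eq_iff_eq_mul.1 hxc)
      · right
        have h1 := mul_inv_eq_iff_eq_mul.1 (hcon x hx hxc)
        have h2 := mul_inv_eq_iff_eq_mul.1 (hcon y hyK hyc)
        have h3 : y⁻¹ * c⁻¹ = c * y⁻¹ := by
          rw [inv_mul_eq_iff_eq_mul, ← mul_assoc, h2, mul_inv_cancel_right]
        simp only [hZ, Finset.mem_filter, Finset.mem_univ, true_and]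
        rw [mul_assoc, h1, ← mul_assoc, h3, mul_assoc]
  classical
  have hsub : (K : Set G5) ⊆ ((Z ∪ Z.image (y * ·) : Finset G5) : Set G5) := by
    intro x hx
    rw [Finset.mem_coe, Finset.mem_union, Finset.mem_image]
    exact (hy x hx).imp id fun h => ⟨_, h, mul_inv_cancel_left y x⟩
  have hle := Set.ncard_le_ncard hsub (Finset.finite_toSet _)
  rw [Set.ncard_coe_finset] at hle
  have h24 : (K : Set G5).ncard = 24 := hK
  have hZ6 : Z.card ≤ 6 := card_centralizer_le hc
  have := Finset.card_union_le Z (Z.image (y * ·))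
  have := Finset.card_image_le (s := Z) (f := (y * ·))
  omega

end SL25

open SL25 in
/-- Every subgroup of `SL(2, ℤ/5ℤ)` of index 5 is isomorphic to `SL(2, ℤ/3ℤ)`. -/
theorem sl25_index_five_subgroups
    (K : Subgroup (Matrix.SpecialLinearGroup (Fin 2) (ZMod 5))) (hK : K.index = 5) :
    Nonempty (K ≃* Matrix.SpecialLinearGroup (Fin 2) (ZMod 3)) := by
  have hcard : Nat.card K = 24 := by
    have h := K.card_mul_index
    rw [hK, Nat.card_eq_fintype_card (α := G5), card_G5] at h
    omega
  have : Fact (Nat.Prime 3) := ⟨Nat.prime_three⟩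
  obtain ⟨⟨c, hcK⟩, hc3⟩ := exists_prime_orderOf_dvd_card' (G := K) 3 (by rw [hcard]; decide)
  rw [Subgroup.orderOf_mk] at hc3
  have hc : (c : M5).trace = -1 := by
    refine trace_of_cube c (hc3 ▸ pow_orderOf_eq_one c) ?_
    rintro rfl
    simp at hc3
  obtain ⟨x, hxK, hx1, hx2⟩ := exists_conj_ne K hcard hc
  have hcK' : x * c * x⁻¹ ∈ K := mul_mem (mul_mem hxK hcK) (inv_mem hxK)
  have hc' : ((x * c * x⁻¹ : G5) : M5).trace = -1 := (trace_conj x c).trans hc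
  by_cases h0 : ((c * (x * c * x⁻¹) : G5) : M5).trace = 0
  · exact nonempty_mulEquiv hc hc' h0 K hcard hcK hcK'
  by_cases h1 : ((c * (x * c * x⁻¹)⁻¹ : G5) : M5).trace = 0
  · exact nonempty_mulEquiv hc ((trace_inv _).trans hc') h1 K hcard hcK (inv_mem hcK')
  rcases good_or_eq K hcard hcK hcK' hc hc' h0 h1 with h | h
  · exact absurd h hx1
  · exact absurd h hx2
end
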